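/- arXiv:1812.10545 — 4 statements merged into one kernel-verified Lean document; each statement's English description precedes it below -/
import Mathlib

section
/- Let N be a positive integer, let κ_1,…,κ_N be nonzero real numbers with κ_i ≠ ±κ_j for i ≠ j, and let q_1,…,q_N be positive real numbers. Define the tau function A(x,t) = Σ_{I ⊆ {1,…,N}} ∏_{i,j∈I, i<j} ((κ_i−κ_j)²/(κ_i+κ_j)²) ∏_{i∈I} q_i e^{−2κ_i x + 8κ_i³ t}. Then A(x,t) > 0 for all (x,t) ∈ ℝ², A is smooth, and the function u(x,t) = −2 ∂²/∂x² log A(x,t) satisfies the Korteweg–de Vries equation u_t = 6 u u_x − u_{xxx} on all of ℝ². -/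
/-!
By the Cauchy determinant, the subset sum is the principal minor expansion of `τ = det (1 + D C)`,
where `D = diag (2 κ q)`, `C i j = E i * E j / (κ i + κ j)` and `E i = exp (-κ i x + 4 κ i ^ 3 t)`.
Put `R = (1 + D C)⁻¹ D` and `W a b = (κ ^ a E)ᵀ R (κ ^ b E)`. Since `∂ₓ C = -E Eᵀ` has rank one,
Jacobi's formula gives `(log τ)ₓ = -W 0 0`, and the moments `W a b` are closed under `∂ₓ` and `∂ₜ`.
The commutator of `C` with `diag (κ ^ 2)` has rank two, which gives a quadratic relation between the
moments; with it, `w = W 0 0` solves the potential KdV equation `w_xxx = 6 w_x ^ 2 - w_t`. The KdV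
equation for `u = 2 w_x` is the `x`-derivative of that equation.
-/

open Finset Filter Topology

section LinearAlgebra

open Matrix

section CommRing

variable {n R : Type*} [Fintype n] [CommRing R]

lemma dotProduct_mul_vecMulVec_mul_mulVec (M : Matrix n n R) (a b c d : n → R) :
    a ⬝ᵥ (M * vecMulVec c d * M) *ᵥ b = (a ⬝ᵥ M *ᵥ c) * (d ⬝ᵥ M *ᵥ b) := by
  rw [← mulVec_mulVec, ← mulVec_mulVec, vecMulVec_mulVec, mulVec_smul, dotProduct_smul,
    op_smul_eq_mul]

variable [DecidableEq n]

lemma det_one_add_eq_sum_det_submatrix (M : Matrix n n R) :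
    (1 + M).det = ∑ s : Finset n, (M.submatrix ((↑) : s → n) (↑)).det := by
  rw [add_comm]
  exact (detRowAlternating.map_add_univ M (1 : Matrix n n R)).trans
    (sum_congr rfl fun s _ => det_piecewise_one_eq_submatrix_det M s)

lemma det_one_add_diagonal_mul_eq_sum (d : n → R) (M : Matrix n n R) :
    (1 + diagonal d * M).det =
      ∑ s : Finset n, (∏ i ∈ s, d i) * (M.submatrix ((↑) : s → n) (↑)).det := by
  rw [det_one_add_eq_sum_det_submatrix]
  refine sum_congr rfl fun s _ => ?_
  rw [← prod_coe_sort, ← det_mul_column]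
  congr 1
  ext i j
  simp only [submatrix_apply, diagonal_mul, of_apply]

/-- The dressed matrix `(1 + P C)⁻¹ P`, equal to `(P⁻¹ + C)⁻¹` when `P` is invertible. It has the
junk value `0` when `1 + P C` is singular. -/
noncomputable def dressedInverse (P C : Matrix n n R) : Matrix n n R :=
  (1 + P * C)⁻¹ * P

variable {P C K : Matrix n n R}

lemma one_add_mul_mul_dressedInverse (h : IsUnit (1 + P * C).det) :
    (1 + P * C) * dressedInverse P C = P := by
  rw [dressedInverse, mul_nonsing_inv_cancel_left _ _ h]

lemma dressedInverse_mul_one_add_mul (h : IsUnit (1 + P * C).det) :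
    dressedInverse P C * (1 + C * P) = P := by
  rw [dressedInverse, Matrix.mul_assoc, show P * (1 + C * P) = (1 + P * C) * P by noncomm_ring,
    nonsing_inv_mul_cancel_left _ _ h]

lemma isSymm_dressedInverse (h : IsUnit (1 + P * C).det) (hP : P.IsSymm) (hC : C.IsSymm) :
    (dressedInverse P C).IsSymm := by
  have key : (1 + P * C) * (dressedInverse P C)ᵀ = P := by
    simpa only [transpose_mul, transpose_add, transpose_one, hP.eq, hC.eq] using
      congrArg transpose (dressedInverse_mul_one_add_mul h)
  rw [IsSymm, ← nonsing_inv_mul_cancel_left _ (dressedInverse P C)ᵀ h, key, dressedInverse]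

lemma dressedInverse_mul_sub_mul_dressedInverse (h : IsUnit (1 + P * C).det)
    (hK : Commute K P) :
    dressedInverse P C * K - K * dressedInverse P C =
      dressedInverse P C * (K * C - C * K) * dressedInverse P C := by
  set D := dressedInverse P C
  have hD : (1 + P * C) * D = P := one_add_mul_mul_dressedInverse h
  have hKD : K * D = P * K - K * P * C * D := by
    rw [← hK.eq, eq_sub_iff_add_eq]
    calc K * D + K * P * C * D = K * ((1 + P * C) * D) := by noncomm_ring
      _ = K * P := by rw [hD]
  have key : (1 + P * C) * (D * K - K * D) = (1 + P * C) * (D * (K * C - C * K) * D) :=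
    calc (1 + P * C) * (D * K - K * D)
        = ((1 + P * C) * D) * K - K * D - P * C * (K * D) := by noncomm_ring
      _ = P * K - (P * K - K * P * C * D) - P * C * (K * D) := by rw [hD, hKD]
      _ = P * (K * C - C * K) * D := by rw [hK.eq]; noncomm_ring
      _ = ((1 + P * C) * D) * (K * C - C * K) * D := by rw [hD]
      _ = (1 + P * C) * (D * (K * C - C * K) * D) := by noncomm_ring
  rw [← nonsing_inv_mul_cancel_left _ (D * K - K * D) h, key, nonsing_inv_mul_cancel_left _ _ h]

end CommRing

section Field

variable {n F : Type*} [DecidableEq n] [Field F]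

lemma det_submatrix_insert {M : Matrix n n F} {s : Finset n} {a : n} (ha : a ∉ s)
    (hM : M a a ≠ 0) :
    (M.submatrix (Subtype.val : ↥(insert a s) → n) Subtype.val).det =
      M a a * (of fun i j : s => M i j - M i a * M a j / M a a).det := by
  let e : s ⊕ Unit ≃ ↥(insert a s) :=
    ((subtypeInsertEquivOption ha).trans (Equiv.optionEquivSumPUnit _)).symm
  let pivot : Matrix Unit Unit F := of fun _ _ => M a a
  let _ : Invertible pivot :=
    invertibleOfLeftInverse _ (of fun _ _ => (M a a)⁻¹) <| by
      ext; simp [pivot, Matrix.mul_apply, hM]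
  have hblocks : (M.submatrix Subtype.val Subtype.val).submatrix e e =
      fromBlocks (of fun i j : s => M i j) (of fun (i : s) _ => M i a)
        (of fun _ (j : s) => M a j) pivot := by
    ext (i | i) (j | j) <;> rfl
  rw [← det_submatrix_equiv_self e, hblocks, det_fromBlocks₂₂, det_unique pivot]
  refine congrArg₂ (· * ·) rfl (congrArg det ?_)
  ext i j
  have hpivot : (⅟pivot) () () = (M a a)⁻¹ := rfl
  simp only [Matrix.sub_apply, Matrix.mul_apply, of_apply, univ_unique, sum_singleton,
    PUnit.default_eq_unit, hpivot]
  ring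

/-- The Cauchy matrix with entries `1 / (x i + y j)`. -/
def cauchyMatrix (x y : n → F) : Matrix n n F :=
  of fun i j => (x i + y j)⁻¹

lemma det_submatrix_cauchyMatrix_insert {x y : n → F} (h : ∀ i j, x i + y j ≠ 0) {s : Finset n}
    {a : n} (ha : a ∉ s) :
    ((cauchyMatrix x y).submatrix (Subtype.val : ↥(insert a s) → n) Subtype.val).det =
      (x a + y a)⁻¹ *
        (∏ i ∈ s, (x i - x a) * (y i - y a) / ((x i + y a) * (x a + y i))) *
        ((cauchyMatrix x y).submatrix (Subtype.val : s → n) Subtype.val).det := by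
  have schur : (of fun i j : s => (x i + y j)⁻¹ - (x i + y a)⁻¹ * (x a + y j)⁻¹ / (x a + y a)⁻¹) =
      diagonal (fun i : s => (x i - x a) / (x i + y a)) *
        (cauchyMatrix x y).submatrix Subtype.val Subtype.val *
        diagonal (fun j : s => (y j - y a) / (x a + y j)) := by
    ext i j
    have := h i j
    have := h i a
    have := h a j
    have := h a a
    simp only [mul_diagonal, diagonal_mul, cauchyMatrix, submatrix_apply, of_apply]
    field_simp
    ring
  rw [det_submatrix_insert ha (inv_ne_zero (h a a))]
  simp only [cauchyMatrix, of_apply] at schur ⊢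
  rw [schur, det_mul, det_mul, det_diagonal, det_diagonal,
    prod_coe_sort s fun i => (x i - x a) / (x i + y a),
    prod_coe_sort s fun i => (y i - y a) / (x a + y i)]
  simp only [← div_mul_div_comm, prod_mul_distrib]
  ring

theorem det_submatrix_cauchyMatrix {n : Type*} [LinearOrder n] {x y : n → F}
    (h : ∀ i j, x i + y j ≠ 0) (s : Finset n) :
    ((cauchyMatrix x y).submatrix (Subtype.val : s → n) Subtype.val).det =
      (∏ i ∈ s, (x i + y i)⁻¹) *
        ∏ i ∈ s, ∏ j ∈ s with i < j,
          (x i - x j) * (y i - y j) / ((x i + y j) * (x j + y i)) := by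
  induction s using Finset.induction_on_max with
  | empty => simp
  | insert a s hlt ih =>
    have ha : a ∉ s := fun hmem => (hlt a hmem).false
    have above_max : {j ∈ insert a s | a < j} = ∅ :=
      filter_eq_empty_iff.2 <| by simpa using fun j hj => (hlt j hj).le
    have above {i : n} (hi : i ∈ s) : {j ∈ insert a s | i < j} = insert a {j ∈ s | i < j} := by
      rw [filter_insert, if_pos (hlt i hi)]
    have hprod : ∏ i ∈ s, ∏ j ∈ insert a s with i < j,
          (x i - x j) * (y i - y j) / ((x i + y j) * (x j + y i)) =
        (∏ i ∈ s, (x i - x a) * (y i - y a) / ((x i + y a) * (x a + y i))) *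
          ∏ i ∈ s, ∏ j ∈ s with i < j,
            (x i - x j) * (y i - y j) / ((x i + y j) * (x j + y i)) := by
      rw [← prod_mul_distrib]
      refine prod_congr rfl fun i hi => ?_
      rw [above hi, prod_insert (by simp [ha])]
    rw [det_submatrix_cauchyMatrix_insert h ha, ih, prod_insert ha, prod_insert ha, above_max,
      hprod, prod_empty]
    ring

end Field

end LinearAlgebra

section Calculus

open Matrix

variable {𝕜 m n : Type*} [NontriviallyNormedField 𝕜]

lemma hasDerivAt_matrix [Finite n] {M : 𝕜 → Matrix m n 𝕜} {M' : Matrix m n 𝕜} {x : 𝕜} :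
    HasDerivAt M M' x ↔ ∀ i j, HasDerivAt (fun y => M y i j) (M' i j) x := by
  have := Fintype.ofFinite n
  exact hasDerivAt_pi.trans (forall_congr' fun _ => hasDerivAt_pi)

variable [Fintype n]

lemma hasDerivAt_dotProduct_mulVec [Fintype m] {a : 𝕜 → m → 𝕜} {a' : m → 𝕜}
    {M : 𝕜 → Matrix m n 𝕜} {M' : Matrix m n 𝕜} {b : 𝕜 → n → 𝕜} {b' : n → 𝕜} {x : 𝕜}
    (ha : HasDerivAt a a' x) (hM : HasDerivAt M M' x) (hb : HasDerivAt b b' x) :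
    HasDerivAt (fun y => a y ⬝ᵥ M y *ᵥ b y)
      (a' ⬝ᵥ M x *ᵥ b x + a x ⬝ᵥ M' *ᵥ b x + a x ⬝ᵥ M x *ᵥ b') x := by
  have entrywise : HasDerivAt (fun y => ∑ i, a y i * ∑ j, M y i j * b y j)
      (∑ i, (a' i * ∑ j, M x i j * b x j +
        a x i * ∑ j, (M' i j * b x j + M x i j * b' j))) x :=
    HasDerivAt.fun_sum fun i _ => (hasDerivAt_pi.1 ha i).mul <| HasDerivAt.fun_sum fun j _ =>
      (hasDerivAt_matrix.1 hM i j).mul (hasDerivAt_pi.1 hb j)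
  refine entrywise.congr_deriv ?_
  simp only [dotProduct, mulVec, sum_add_distrib, mul_add, add_assoc]

variable [DecidableEq n] {M : 𝕜 → Matrix n n 𝕜} {M' : Matrix n n 𝕜} {x : 𝕜}

open scoped Matrix.Norms.Operator in
lemma hasDerivAt_one_add_const_mul (P : Matrix n n 𝕜) (hM : HasDerivAt M M' x) :
    HasDerivAt (fun y => 1 + P * M y) (P * M') x :=
  (hM.const_mul P).const_add 1

theorem hasDerivAt_det (hM : HasDerivAt M M' x) :
    HasDerivAt (fun y => (M y).det) ((M x).adjugate * M').trace x := by
  have leibniz : HasDerivAt (fun y => (M y).det)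
      (∑ σ : Equiv.Perm n, Equiv.Perm.sign σ •
        ∑ i, (∏ j ∈ univ.erase i, M x (σ j) j) • M' (σ i) i) x := by
    simp only [det_apply]
    exact HasDerivAt.fun_sum fun σ _ => (HasDerivAt.fun_finsetProd fun i _ =>
      hasDerivAt_matrix.1 hM (σ i) i).const_smul _
  have replaced_column (i : n) :
      ((M x).adjugate * M') i i = ((M x).updateCol i fun k => M' k i).det := by
    rw [← cramer_apply, cramer_eq_adjugate_mulVec]
    rfl
  refine leibniz.congr_deriv ?_
  simp only [trace, Matrix.diag, replaced_column, det_apply, smul_sum]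
  rw [sum_comm]
  refine sum_congr rfl fun i _ => sum_congr rfl fun σ _ => ?_
  rw [← prod_erase_mul univ _ (mem_univ i), updateCol_self, smul_eq_mul]
  congr 2
  exact prod_congr rfl fun j hj => (updateCol_ne (ne_of_mem_erase hj)).symm

lemma hasDerivAt_log_det {M : ℝ → Matrix n n ℝ} {M' : Matrix n n ℝ} {x : ℝ}
    (hM : HasDerivAt M M' x) (h : (M x).det ≠ 0) :
    HasDerivAt (fun y => Real.log (M y).det) ((M x)⁻¹ * M').trace x := by
  refine ((hasDerivAt_det hM).log h).congr_deriv ?_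
  rw [Matrix.inv_def, Ring.inverse_eq_inv', Matrix.smul_mul, trace_smul, smul_eq_mul,
    div_eq_inv_mul]

open scoped Matrix.Norms.Operator in
lemma hasDerivAt_matrix_inv [CompleteSpace 𝕜] (hM : HasDerivAt M M' x) (h : IsUnit (M x).det) :
    HasDerivAt (fun y => (M y)⁻¹) (-((M x)⁻¹ * M' * (M x)⁻¹)) x := by
  -- The instance found by default for matrices is the product uniformity.
  have : @CompleteSpace (Matrix n n 𝕜) PseudoMetricSpace.toUniformSpace :=
    FiniteDimensional.complete 𝕜 _
  obtain ⟨v, hv⟩ := (isUnit_iff_isUnit_det _).2 h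
  have hinv : HasFDerivAt Ring.inverse
      (-ContinuousLinearMap.mulLeftRight 𝕜 _ ↑v⁻¹ ↑v⁻¹) (M x) := hv ▸ hasFDerivAt_ringInverse v
  simp only [nonsing_inv_eq_ringInverse, ← hv, Ring.inverse_unit]
  exact hinv.comp_hasDerivAt x hM

open scoped Matrix.Norms.Operator in
lemma hasDerivAt_dressedInverse [CompleteSpace 𝕜] (P : Matrix n n 𝕜) (hM : HasDerivAt M M' x)
    (h : IsUnit (1 + P * M x).det) :
    HasDerivAt (fun y => dressedInverse P (M y))
      (-(dressedInverse P (M x) * M' * dressedInverse P (M x))) x := by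
  have hinv := hasDerivAt_matrix_inv (hasDerivAt_one_add_const_mul P hM) h
  refine (hinv.mul_const P).congr_deriv ?_
  simp only [dressedInverse]
  noncomm_ring

lemma iteratedDeriv_succ_of_eventually {F : Type*} [NormedAddCommGroup F] [NormedSpace 𝕜 F]
    {f f' : 𝕜 → F} {x : 𝕜} (h : ∀ᶠ y in 𝓝 x, HasDerivAt f (f' y) y) (n : ℕ) :
    iteratedDeriv (n + 1) f x = iteratedDeriv n f' x := by
  rw [iteratedDeriv_succ']
  exact Filter.EventuallyEq.iteratedDeriv_eq n (h.mono fun _ hy => hy.deriv)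

end Calculus

/-- The field `-2 ∂ₓ² log A` attached to a tau function `A` by Hirota's substitution. -/
noncomputable def hirotaField (A : ℝ → ℝ → ℝ) (x t : ℝ) : ℝ :=
  -2 * iteratedDeriv 2 (fun y => Real.log (A y t)) x

/-- The Korteweg–de Vries equation `u_t = 6 u u_x - u_xxx` at the point `(x, t)`. -/
def KdVAt (u : ℝ → ℝ → ℝ) (x t : ℝ) : Prop :=
  deriv (fun s => u x s) t =
    6 * u x t * deriv (fun y => u y t) x - iteratedDeriv 3 (fun y => u y t) x

section Soliton

open Matrix

variable {ι : Type*}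

/-- The vector with entries `κ i ^ a * exp (-κ i * x + 4 * κ i ^ 3 * t)`. -/
noncomputable def solitonMode (κ : ι → ℝ) (a : ℕ) (x t : ℝ) : ι → ℝ :=
  fun i => κ i ^ a * Real.exp (-κ i * x + 4 * κ i ^ 3 * t)

/-- The Cauchy matrix of `κ` dressed by the modes. It solves `∂ₓ C = -E Eᵀ` with
`E = solitonMode κ 0 x t`. -/
noncomputable def solitonKernel (κ : ι → ℝ) (x t : ℝ) : Matrix ι ι ℝ :=
  of fun i j => solitonMode κ 0 x t i * solitonMode κ 0 x t j / (κ i + κ j)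

variable (κ : ι → ℝ)

lemma hasDerivAt_solitonMode_space (a : ℕ) (x t : ℝ) :
    HasDerivAt (fun y => solitonMode κ a y t) (-solitonMode κ (a + 1) x t) x := by
  refine hasDerivAt_pi.2 fun i => ?_
  have hexponent : HasDerivAt (fun y => -κ i * y + 4 * κ i ^ 3 * t) (-κ i) x := by
    simpa using ((hasDerivAt_id x).const_mul (-κ i)).add_const (4 * κ i ^ 3 * t)
  refine (hexponent.exp.const_mul (κ i ^ a)).congr_deriv ?_
  simp only [solitonMode, Pi.neg_apply]
  ring

lemma hasDerivAt_solitonMode_time (a : ℕ) (x t : ℝ) :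
    HasDerivAt (fun s => solitonMode κ a x s) ((4 : ℝ) • solitonMode κ (a + 3) x t) t := by
  refine hasDerivAt_pi.2 fun i => ?_
  have hexponent : HasDerivAt (fun s => -κ i * x + 4 * κ i ^ 3 * s) (4 * κ i ^ 3) t := by
    simpa using ((hasDerivAt_id t).const_mul (4 * κ i ^ 3)).const_add (-κ i * x)
  refine (hexponent.exp.const_mul (κ i ^ a)).congr_deriv ?_
  simp only [solitonMode, Pi.smul_apply, smul_eq_mul]
  ring

lemma isSymm_solitonKernel (x t : ℝ) : (solitonKernel κ x t).IsSymm := by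
  ext i j
  simp only [transpose_apply, solitonKernel, of_apply, add_comm (κ j),
    mul_comm (solitonMode κ 0 x t j)]

section Kernel

variable {κ} [Finite ι] (hκ : ∀ i j, κ i + κ j ≠ 0)
include hκ

lemma hasDerivAt_solitonKernel_space (x t : ℝ) :
    HasDerivAt (fun y => solitonKernel κ y t)
      (-vecMulVec (solitonMode κ 0 x t) (solitonMode κ 0 x t)) x := by
  refine hasDerivAt_matrix.2 fun i j => ?_
  simp only [solitonKernel, of_apply]
  have hmode (i) := hasDerivAt_pi.1 (hasDerivAt_solitonMode_space κ 0 x t) i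
  refine (((hmode i).mul (hmode j)).div_const (κ i + κ j)).congr_deriv ?_
  have := hκ i j
  simp only [solitonMode, Matrix.neg_apply, Pi.neg_apply, vecMulVec_apply]
  field_simp
  ring

lemma hasDerivAt_solitonKernel_time (x t : ℝ) :
    HasDerivAt (fun s => solitonKernel κ x s)
      ((4 : ℝ) • (vecMulVec (solitonMode κ 2 x t) (solitonMode κ 0 x t)
        - vecMulVec (solitonMode κ 1 x t) (solitonMode κ 1 x t)
        + vecMulVec (solitonMode κ 0 x t) (solitonMode κ 2 x t))) t := by
  refine hasDerivAt_matrix.2 fun i j => ?_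
  simp only [solitonKernel, of_apply]
  have hmode (i) := hasDerivAt_pi.1 (hasDerivAt_solitonMode_time κ 0 x t) i
  refine (((hmode i).mul (hmode j)).div_const (κ i + κ j)).congr_deriv ?_
  have := hκ i j
  simp only [solitonMode, Matrix.add_apply, Matrix.sub_apply, Matrix.smul_apply, Pi.smul_apply,
    vecMulVec_apply, smul_eq_mul]
  field_simp
  ring

end Kernel

variable [Fintype ι] [DecidableEq ι]

/-- The tau function in determinant form, with general weights `d`. -/
noncomputable def solitonDet (κ d : ι → ℝ) (x t : ℝ) : ℝ :=
  (1 + diagonal d * solitonKernel κ x t).det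

/-- The bilinear moments `W_ab` of the modes against the dressed matrix `(1 + D C)⁻¹ D`. The
potential of the KdV field is `W_00`. -/
noncomputable def solitonMoment (κ d : ι → ℝ) (x t : ℝ) (a b : ℕ) : ℝ :=
  solitonMode κ a x t ⬝ᵥ
    dressedInverse (diagonal d) (solitonKernel κ x t) *ᵥ solitonMode κ b x t

variable {κ} {d : ι → ℝ} {x t : ℝ}

lemma solitonMoment_comm (h : solitonDet κ d x t ≠ 0) (a b : ℕ) :
    solitonMoment κ d x t a b = solitonMoment κ d x t b a := by
  have hsymm := isSymm_dressedInverse h.isUnit (isSymm_diagonal d) (isSymm_solitonKernel κ x t)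
  rw [solitonMoment, dotProduct_comm, ← vecMul_transpose, hsymm.eq, ← dotProduct_mulVec,
    solitonMoment]

variable (hκ : ∀ i j, κ i + κ j ≠ 0)
include hκ

lemma diagonal_sq_mul_solitonKernel_sub (x t : ℝ) :
    diagonal (fun i => κ i ^ 2) * solitonKernel κ x t -
        solitonKernel κ x t * diagonal (fun i => κ i ^ 2) =
      vecMulVec (solitonMode κ 1 x t) (solitonMode κ 0 x t) -
        vecMulVec (solitonMode κ 0 x t) (solitonMode κ 1 x t) := by
  ext i j
  have := hκ i j
  simp only [Matrix.sub_apply, diagonal_mul, mul_diagonal, solitonKernel, of_apply, vecMulVec_apply,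
    solitonMode]
  field_simp
  ring

lemma eventually_solitonDet_ne_zero_space (h : solitonDet κ d x t ≠ 0) :
    ∀ᶠ y in 𝓝 x, solitonDet κ d y t ≠ 0 := by
  have hmatrix := hasDerivAt_one_add_const_mul (diagonal d) (hasDerivAt_solitonKernel_space hκ x t)
  exact (hasDerivAt_det hmatrix).continuousAt.eventually_ne h

lemma eventually_solitonDet_ne_zero_time (h : solitonDet κ d x t ≠ 0) :
    ∀ᶠ s in 𝓝 t, solitonDet κ d x s ≠ 0 := by
  have hmatrix := hasDerivAt_one_add_const_mul (diagonal d) (hasDerivAt_solitonKernel_time hκ x t)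
  exact (hasDerivAt_det hmatrix).continuousAt.eventually_ne h

lemma hasDerivAt_log_solitonDet (h : solitonDet κ d x t ≠ 0) :
    HasDerivAt (fun y => Real.log (solitonDet κ d y t)) (-solitonMoment κ d x t 0 0) x := by
  have hmatrix := hasDerivAt_one_add_const_mul (diagonal d) (hasDerivAt_solitonKernel_space hκ x t)
  refine (hasDerivAt_log_det hmatrix h).congr_deriv ?_
  rw [Matrix.mul_neg, Matrix.mul_neg, ← Matrix.mul_assoc, ← dressedInverse, mul_vecMulVec,
    trace_neg, trace_vecMulVec, dotProduct_comm, solitonMoment]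

lemma hasDerivAt_solitonMoment_space (h : solitonDet κ d x t ≠ 0) (a b : ℕ) :
    HasDerivAt (fun y => solitonMoment κ d y t a b)
      (-solitonMoment κ d x t (a + 1) b - solitonMoment κ d x t a (b + 1) +
        solitonMoment κ d x t a 0 * solitonMoment κ d x t 0 b) x := by
  refine (hasDerivAt_dotProduct_mulVec (hasDerivAt_solitonMode_space κ a x t)
    (hasDerivAt_dressedInverse (diagonal d) (hasDerivAt_solitonKernel_space hκ x t) h.isUnit)
    (hasDerivAt_solitonMode_space κ b x t)).congr_deriv ?_
  simp only [Matrix.mul_neg, Matrix.neg_mul, neg_neg, neg_dotProduct, mulVec_neg, dotProduct_neg,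
    dotProduct_mul_vecMulVec_mul_mulVec, solitonMoment]
  ring

lemma hasDerivAt_solitonMoment_time (h : solitonDet κ d x t ≠ 0) (a b : ℕ) :
    HasDerivAt (fun s => solitonMoment κ d x s a b)
      (4 * (solitonMoment κ d x t (a + 3) b + solitonMoment κ d x t a (b + 3)
        - solitonMoment κ d x t a 2 * solitonMoment κ d x t 0 b
        + solitonMoment κ d x t a 1 * solitonMoment κ d x t 1 b
        - solitonMoment κ d x t a 0 * solitonMoment κ d x t 2 b)) t := by
  refine (hasDerivAt_dotProduct_mulVec (hasDerivAt_solitonMode_time κ a x t)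
    (hasDerivAt_dressedInverse (diagonal d) (hasDerivAt_solitonKernel_time hκ x t) h.isUnit)
    (hasDerivAt_solitonMode_time κ b x t)).congr_deriv ?_
  simp only [Matrix.mul_smul, Matrix.smul_mul, Matrix.mul_add, Matrix.mul_sub, Matrix.add_mul,
    Matrix.sub_mul, neg_mulVec, smul_mulVec, add_mulVec, sub_mulVec, mulVec_smul, smul_dotProduct,
    dotProduct_neg, dotProduct_smul, dotProduct_add, dotProduct_sub,
    dotProduct_mul_vecMulVec_mul_mulVec, solitonMoment, smul_eq_mul]
  ring

lemma solitonMoment_add_two_sub (h : solitonDet κ d x t ≠ 0) (a b : ℕ) :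
    solitonMoment κ d x t a (b + 2) - solitonMoment κ d x t (a + 2) b =
      solitonMoment κ d x t a 1 * solitonMoment κ d x t 0 b -
        solitonMoment κ d x t a 0 * solitonMoment κ d x t 1 b := by
  set K : Matrix ι ι ℝ := diagonal fun i => κ i ^ 2
  set R := dressedInverse (diagonal d) (solitonKernel κ x t)
  have hraise (c : ℕ) : solitonMode κ (c + 2) x t = K *ᵥ solitonMode κ c x t := by
    ext i
    simp only [K, mulVec_diagonal, solitonMode]
    ring
  have hraise_left (c : ℕ) : solitonMode κ (c + 2) x t = solitonMode κ c x t ᵥ* K := by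
    rw [hraise, ← vecMul_transpose, diagonal_transpose]
  have hcomm : R * K - K * R = _ :=
    dressedInverse_mul_sub_mul_dressedInverse h.isUnit (commute_diagonal (fun i => κ i ^ 2) d)
  rw [diagonal_sq_mul_solitonKernel_sub hκ] at hcomm
  calc solitonMoment κ d x t a (b + 2) - solitonMoment κ d x t (a + 2) b
      = solitonMode κ a x t ⬝ᵥ (R * K - K * R) *ᵥ solitonMode κ b x t := by
        rw [solitonMoment, solitonMoment, hraise b, hraise_left a, ← dotProduct_mulVec,
          mulVec_mulVec, mulVec_mulVec, sub_mulVec, dotProduct_sub]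
    _ = solitonMoment κ d x t a 1 * solitonMoment κ d x t 0 b -
          solitonMoment κ d x t a 0 * solitonMoment κ d x t 1 b := by
        rw [hcomm, Matrix.mul_sub, Matrix.sub_mul, sub_mulVec, dotProduct_sub,
          dotProduct_mul_vecMulVec_mul_mulVec, dotProduct_mul_vecMulVec_mul_mulVec]
        rfl

/-- The first `x`-derivative of the potential `w = solitonMoment κ d x t 0 0`, expressed through
moments. -/
noncomputable def potentialX (κ d : ι → ℝ) (x t : ℝ) : ℝ :=
  solitonMoment κ d x t 0 0 ^ 2 - 2 * solitonMoment κ d x t 0 1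

/-- The second `x`-derivative of the potential, expressed through moments. -/
noncomputable def potentialXX (κ d : ι → ℝ) (x t : ℝ) : ℝ :=
  2 * solitonMoment κ d x t 0 0 ^ 3
    - 6 * solitonMoment κ d x t 0 0 * solitonMoment κ d x t 0 1
    + 2 * solitonMoment κ d x t 1 1 + 2 * solitonMoment κ d x t 0 2

/-- The `t`-derivative of the potential, expressed through moments. -/
noncomputable def potentialT (κ d : ι → ℝ) (x t : ℝ) : ℝ :=
  4 * (2 * solitonMoment κ d x t 0 3
    - 2 * solitonMoment κ d x t 0 0 * solitonMoment κ d x t 0 2 + solitonMoment κ d x t 0 1 ^ 2)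

/-- The mixed second derivative of the potential, expressed through moments. -/
noncomputable def potentialXT (κ d : ι → ℝ) (x t : ℝ) : ℝ :=
  2 * solitonMoment κ d x t 0 0 * potentialT κ d x t
    - 8 * (solitonMoment κ d x t 1 3 + solitonMoment κ d x t 0 4
      - solitonMoment κ d x t 0 2 * solitonMoment κ d x t 0 1
      + solitonMoment κ d x t 0 1 * solitonMoment κ d x t 1 1
      - solitonMoment κ d x t 0 0 * solitonMoment κ d x t 1 2)

lemma hasDerivAt_potential_space (h : solitonDet κ d x t ≠ 0) :
    HasDerivAt (fun y => solitonMoment κ d y t 0 0) (potentialX κ d x t) x := by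
  refine (hasDerivAt_solitonMoment_space hκ h 0 0).congr_deriv ?_
  rw [potentialX, zero_add, solitonMoment_comm h 1 0]
  ring

lemma hasDerivAt_potential_time (h : solitonDet κ d x t ≠ 0) :
    HasDerivAt (fun s => solitonMoment κ d x s 0 0) (potentialT κ d x t) t := by
  refine (hasDerivAt_solitonMoment_time hκ h 0 0).congr_deriv ?_
  rw [potentialT, zero_add, solitonMoment_comm h 3 0, solitonMoment_comm h 2 0,
    solitonMoment_comm h 1 0]
  ring

lemma hasDerivAt_potentialX_space (h : solitonDet κ d x t ≠ 0) :
    HasDerivAt (fun y => potentialX κ d y t) (potentialXX κ d x t) x := by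
  refine (((hasDerivAt_potential_space hκ h).pow 2).sub
    ((hasDerivAt_solitonMoment_space hκ h 0 1).const_mul 2)).congr_deriv ?_
  simp only [potentialX, potentialXX]
  ring

lemma hasDerivAt_potentialX_time (h : solitonDet κ d x t ≠ 0) :
    HasDerivAt (fun s => potentialX κ d x s) (potentialXT κ d x t) t := by
  refine (((hasDerivAt_potential_time hκ h).pow 2).sub
    ((hasDerivAt_solitonMoment_time hκ h 0 1).const_mul 2)).congr_deriv ?_
  simp only [potentialXT, zero_add, Nat.reduceAdd, solitonMoment_comm h 3 1,
    solitonMoment_comm h 2 1]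
  ring

lemma hasDerivAt_potentialT (h : solitonDet κ d x t ≠ 0) :
    HasDerivAt (fun y => potentialT κ d y t) (potentialXT κ d x t) x := by
  have hw := hasDerivAt_potential_space hκ h
  have h01 := hasDerivAt_solitonMoment_space hκ h 0 1
  have h02 := hasDerivAt_solitonMoment_space hκ h 0 2
  have h03 := hasDerivAt_solitonMoment_space hκ h 0 3
  refine ((((h03.const_mul 2).sub ((hw.const_mul 2).mul h02)).add
    (h01.pow 2)).const_mul 4).congr_deriv ?_
  simp only [potentialX, potentialT, potentialXT]
  ring

theorem hasDerivAt_potentialXX (h : solitonDet κ d x t ≠ 0) :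
    HasDerivAt (fun y => potentialXX κ d y t)
      (6 * potentialX κ d x t ^ 2 - potentialT κ d x t) x := by
  have hw := hasDerivAt_potential_space hκ h
  have h01 := hasDerivAt_solitonMoment_space hκ h 0 1
  have h11 := hasDerivAt_solitonMoment_space hκ h 1 1
  have h02 := hasDerivAt_solitonMoment_space hκ h 0 2
  refine (((((hw.pow 3).const_mul 2).sub ((hw.const_mul 6).mul h01)).add
    (h11.const_mul 2)).add (h02.const_mul 2)).congr_deriv ?_
  -- The moment rules alone leave a multiple of this relation between `w_xxx` and the claim.
  have hexchange := solitonMoment_add_two_sub hκ h 0 1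
  simp only [potentialX, potentialT, zero_add, one_add_one_eq_two, Nat.reduceAdd,
    solitonMoment_comm h 2 1, solitonMoment_comm h 1 0] at hexchange ⊢
  linear_combination 6 * hexchange

lemma hirotaField_solitonDet (h : solitonDet κ d x t ≠ 0) :
    hirotaField (solitonDet κ d) x t = 2 * potentialX κ d x t := by
  have hlog : ∀ᶠ y in 𝓝 x, HasDerivAt (fun y => Real.log (solitonDet κ d y t))
      (-solitonMoment κ d y t 0 0) y :=
    (eventually_solitonDet_ne_zero_space hκ h).mono fun y hy => hasDerivAt_log_solitonDet hκ hy
  rw [hirotaField, iteratedDeriv_succ_of_eventually hlog, iteratedDeriv_one,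
    (hasDerivAt_potential_space hκ h).fun_neg.deriv]
  ring

theorem kdvAt_hirotaField_solitonDet (h : solitonDet κ d x t ≠ 0) :
    KdVAt (hirotaField (solitonDet κ d)) x t := by
  have hnear := eventually_solitonDet_ne_zero_space hκ h
  have hspace : (fun y => hirotaField (solitonDet κ d) y t) =ᶠ[𝓝 x]
      fun y => 2 * potentialX κ d y t :=
    hnear.mono fun y hy => hirotaField_solitonDet hκ hy
  have htime : (fun s => hirotaField (solitonDet κ d) x s) =ᶠ[𝓝 t]
      fun s => 2 * potentialX κ d x s :=
    (eventually_solitonDet_ne_zero_time hκ h).mono fun s hs => hirotaField_solitonDet hκ hs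
  have hut : deriv (fun s => hirotaField (solitonDet κ d) x s) t = 2 * potentialXT κ d x t := by
    rw [htime.deriv_eq, ((hasDerivAt_potentialX_time hκ h).const_mul 2).deriv]
  have hux : deriv (fun y => hirotaField (solitonDet κ d) y t) x = 2 * potentialXX κ d x t := by
    rw [hspace.deriv_eq, ((hasDerivAt_potentialX_space hκ h).const_mul 2).deriv]
  have huxxx : iteratedDeriv 3 (fun y => hirotaField (solitonDet κ d) y t) x =
      2 * (12 * potentialX κ d x t * potentialXX κ d x t - potentialXT κ d x t) := by
    rw [hspace.iteratedDeriv_eq,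
      iteratedDeriv_succ_of_eventually
        (hnear.mono fun y hy => (hasDerivAt_potentialX_space hκ hy).const_mul 2),
      iteratedDeriv_succ_of_eventually
        (hnear.mono fun y hy => (hasDerivAt_potentialXX hκ hy).const_mul 2),
      iteratedDeriv_one]
    refine ((((((hasDerivAt_potentialX_space hκ h).pow 2).const_mul 6).sub
      (hasDerivAt_potentialT hκ h)).const_mul 2).congr_deriv ?_).deriv
    ring
  rw [KdVAt, hut, hux, huxxx, hirotaField_solitonDet hκ h]
  ring

end Soliton

section Tau

variable {ι : Type*} [LinearOrder ι]

open Matrix in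
lemma det_submatrix_solitonKernel {κ : ι → ℝ} (hκ : ∀ i j, κ i + κ j ≠ 0) (x t : ℝ)
    (I : Finset ι) :
    ((solitonKernel κ x t).submatrix (Subtype.val : I → ι) Subtype.val).det =
      (∏ i ∈ I, solitonMode κ 0 x t i ^ 2 / (2 * κ i)) *
        ∏ i ∈ I, ∏ j ∈ I with i < j, (κ i - κ j) ^ 2 / (κ i + κ j) ^ 2 := by
  have hfactor : (solitonKernel κ x t).submatrix (Subtype.val : I → ι) Subtype.val =
      diagonal (fun i : I => solitonMode κ 0 x t i) *
        (cauchyMatrix κ κ).submatrix Subtype.val Subtype.val *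
        diagonal (fun i : I => solitonMode κ 0 x t i) := by
    ext i j
    simp only [solitonKernel, cauchyMatrix, submatrix_apply, mul_diagonal, diagonal_mul, of_apply]
    ring
  rw [hfactor, det_mul, det_mul, det_diagonal, prod_coe_sort I (solitonMode κ 0 x t),
    det_submatrix_cauchyMatrix hκ]
  simp only [div_eq_mul_inv, prod_mul_distrib, two_mul, sq, add_comm (κ _) (κ _), mul_inv]
  ring

variable [Fintype ι]

/-- The tau function of the KdV equation with spectral parameters `κ` and norming constants `q`,
as a sum over the subsets of the index type. -/
noncomputable def solitonTau (κ q : ι → ℝ) (x t : ℝ) : ℝ :=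
  ∑ I : Finset ι, (∏ i ∈ I, ∏ j ∈ I with i < j, ((κ i - κ j) ^ 2 / (κ i + κ j) ^ 2)) *
    ∏ i ∈ I, q i * Real.exp (-2 * κ i * x + 8 * κ i ^ 3 * t)

theorem solitonTau_pos (κ : ι → ℝ) {q : ι → ℝ} (hq : ∀ i, 0 ≤ q i) (x t : ℝ) :
    0 < solitonTau κ q x t := by
  refine sum_pos' (fun I _ => mul_nonneg (by positivity) (prod_nonneg fun i _ => ?_))
    ⟨∅, mem_univ ∅, by simp⟩
  exact mul_nonneg (hq i) (Real.exp_pos _).le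

theorem contDiff_solitonTau (κ q : ι → ℝ) {n : WithTop ℕ∞} :
    ContDiff ℝ n fun p : ℝ × ℝ => solitonTau κ q p.1 p.2 := by
  unfold solitonTau
  fun_prop

theorem solitonTau_eq_solitonDet {κ : ι → ℝ} (hκ : ∀ i j, κ i + κ j ≠ 0) (q : ι → ℝ) :
    solitonTau κ q = solitonDet κ fun i => 2 * κ i * q i := by
  ext x t
  rw [solitonTau, solitonDet, det_one_add_diagonal_mul_eq_sum]
  refine sum_congr rfl fun I _ => ?_
  have hweights : ∏ i ∈ I, q i * Real.exp (-2 * κ i * x + 8 * κ i ^ 3 * t) =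
      (∏ i ∈ I, 2 * κ i * q i) * ∏ i ∈ I, solitonMode κ 0 x t i ^ 2 / (2 * κ i) := by
    rw [← prod_mul_distrib]
    refine prod_congr rfl fun i _ => ?_
    have hκi : κ i ≠ 0 := fun hi => hκ i i (by rw [hi, add_zero])
    have hexp : Real.exp (-2 * κ i * x + 8 * κ i ^ 3 * t) = solitonMode κ 0 x t i ^ 2 := by
      rw [solitonMode, pow_zero, one_mul, ← Real.exp_nat_mul]
      push_cast
      ring_nf
    rw [hexp]
    field_simp
  rw [det_submatrix_solitonKernel hκ, hweights]
  ring

theorem nsoliton_solves_kdv_general {κ : ι → ℝ} (hκ : ∀ i j, κ i + κ j ≠ 0) (q : ι → ℝ) :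
    ((∀ i, 0 ≤ q i) → ∀ x t, 0 < solitonTau κ q x t) ∧
    ContDiff ℝ (⊤ : ℕ∞) (fun p : ℝ × ℝ => solitonTau κ q p.1 p.2) ∧
    ∀ x t, solitonTau κ q x t ≠ 0 → KdVAt (hirotaField (solitonTau κ q)) x t := by
  refine ⟨solitonTau_pos κ, contDiff_solitonTau κ q, fun x t h => ?_⟩
  rw [solitonTau_eq_solitonDet hκ] at h ⊢
  exact kdvAt_hirotaField_solitonDet hκ h

end Tau

/-- The `N`-soliton tau function is positive and smooth, and
`u = -2 (log A)_{xx}` solves the KdV equation `u_t = 6 u u_x - u_{xxx}`. -/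
theorem nsoliton_solves_kdv (N : ℕ) (hN : 0 < N) (κ q : Fin N → ℝ)
    (hκ0 : ∀ i, κ i ≠ 0)
    (hκ : ∀ i j, i ≠ j → κ i ≠ κ j ∧ κ i ≠ -κ j)
    (hq : ∀ i, 0 < q i)
    (A : ℝ → ℝ → ℝ)
    (hA : A = fun x t => ∑ I : Finset (Fin N),
        (∏ i ∈ I, ∏ j ∈ I.filter (fun j => i < j),
            ((κ i - κ j) ^ 2 / (κ i + κ j) ^ 2)) *
          ∏ i ∈ I, q i * Real.exp (-2 * κ i * x + 8 * (κ i) ^ 3 * t))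
    (u : ℝ → ℝ → ℝ)
    (hu : u = fun x t => -2 * iteratedDeriv 2 (fun y => Real.log (A y t)) x) :
    (∀ x t : ℝ, 0 < A x t) ∧
    ContDiff ℝ (⊤ : ℕ∞) (fun p : ℝ × ℝ => A p.1 p.2) ∧
    (∀ x t : ℝ, deriv (fun τ => u x τ) t =
      6 * u x t * deriv (fun y => u y t) x - iteratedDeriv 3 (fun y => u y t) x) := by
  obtain rfl : A = solitonTau κ q := hA
  obtain rfl : u = hirotaField (solitonTau κ q) := hu
  have hsum (i j) : κ i + κ j ≠ 0 := by
    obtain rfl | hij := eq_or_ne i j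
    · simpa only [← two_mul] using mul_ne_zero two_ne_zero (hκ0 i)
    · exact fun h => (hκ i j hij).2 (eq_neg_of_add_eq_zero_left h)
  obtain ⟨hpos, hsmooth, hkdv⟩ := nsoliton_solves_kdv_general hsum q
  have hpos := hpos fun i => (hq i).le
  exact ⟨hpos, hsmooth, fun x t => hkdv x t (hpos x t).ne'⟩
end

section
/- Let κ_1,…,κ_N be distinct positive real numbers, and set q_n = ∏_{m≠n} |(κ_n+κ_m)/(κ_n−κ_m)| for n = 1,…,N. Define A(x) = Σ_{I ⊆ {1,…,N}} ∏_{i,j∈I, i<j} ((κ_i−κ_j)²/(κ_i+κ_j)²) ∏_{i∈I} q_i e^{−2κ_i x}. Then the function u(x) = −2 (d²/dx²) log A(x) is even: u(−x) = u(x) for all x ∈ ℝ. -/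
open Finset

/-!
Multiplying out the phases `q i` over a subset `I`, every pair inside `I` occurs twice and cancels
against the interaction coefficient. So the summand of `A` belonging to `I` is a product over the
pairs separated by the cut `(I, Iᶜ)`, times `exp (∑ i ∈ I, -2 κ i x)`. The cut weight does not
change when `I` and `Iᶜ` are swapped, hence reindexing the sum by complements gives
`A (-x) = exp (a x) * A x` with a constant `a`. Therefore `log A (-x)` and `log A x` differ by a
linear function of `x`, which the second derivative kills.
-/

section CutWeight

variable {ι M : Type*}

lemma prod_prod_filter_lt_mul_swap [LinearOrder ι] [CommMonoid M] (s : Finset ι)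
    (f : ι → ι → M) :
    ∏ i ∈ s, ∏ j ∈ s with i < j, (f i j * f j i) = ∏ i ∈ s, ∏ j ∈ s.erase i, f i j := by
  have swap : ∏ i ∈ s, ∏ j ∈ s with i < j, f j i = ∏ i ∈ s, ∏ j ∈ s with j < i, f i j :=
    prod_comm' fun i j => by simp only [mem_filter]; tauto
  have split (i : ι) : (∏ j ∈ s with i < j, f i j) * ∏ j ∈ s with j < i, f i j
      = ∏ j ∈ s.erase i, f i j := by
    rw [← prod_union (disjoint_filter.2 fun j _ h => h.asymm), ← filter_or, ← filter_ne']
    simp only [← ne_iff_lt_or_gt, ne_comm]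
  simp only [prod_mul_distrib, swap, ← split]

variable [Fintype ι]

/-- The weight of the cut `(I, Iᶜ)`: the product of the pair weights `w i j` over all `i ∈ I` and
`j ∉ I`. For symmetric `w` it depends only on the unordered bipartition `{I, Iᶜ}`. -/
def cutWeight [DecidableEq ι] [CommMonoid M] (w : ι → ι → M) (I : Finset ι) : M :=
  ∏ i ∈ I, ∏ j ∈ Iᶜ, w i j

lemma cutWeight_compl [DecidableEq ι] [CommMonoid M] {w : ι → ι → M}
    (hw : ∀ i j, w i j = w j i) (I : Finset ι) : cutWeight w Iᶜ = cutWeight w I := by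
  simp only [cutWeight, compl_compl]
  rw [prod_comm]
  simp only [hw]

lemma cutWeight_pos [DecidableEq ι] {w : ι → ι → ℝ} (hw : ∀ i j, i ≠ j → 0 < w i j)
    (I : Finset ι) : 0 < cutWeight w I :=
  prod_pos fun i hi => prod_pos fun j hj => hw i j (ne_of_mem_of_not_mem hi (mem_compl.1 hj))

lemma prod_prod_erase_eq_mul_cutWeight [DecidableEq ι] [CommMonoid M] (w : ι → ι → M)
    (I : Finset ι) :
    ∏ i ∈ I, ∏ j ∈ univ.erase i, w i j = (∏ i ∈ I, ∏ j ∈ I.erase i, w i j) * cutWeight w I := by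
  rw [cutWeight, ← prod_mul_distrib]
  refine prod_congr rfl fun i hi => ?_
  have notMem : i ∉ Iᶜ := notMem_compl.2 hi
  rw [← prod_union (disjoint_compl_right.mono_left (erase_subset i I)), ← union_compl I,
    erase_union_distrib, erase_eq_of_notMem notMem]

lemma prod_inv_sq_mul_prod_prod_erase [LinearOrder ι] [CommGroupWithZero M] {w : ι → ι → M}
    (hw : ∀ i j, w i j = w j i) (hw₀ : ∀ i j, i ≠ j → w i j ≠ 0) (I : Finset ι) :
    (∏ i ∈ I, ∏ j ∈ I with i < j, (w i j ^ 2)⁻¹) * ∏ i ∈ I, ∏ j ∈ univ.erase i, w i j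
      = cutWeight w I := by
  have inner : ∏ i ∈ I, ∏ j ∈ I.erase i, w i j = ∏ i ∈ I, ∏ j ∈ I with i < j, w i j ^ 2 := by
    simp only [← prod_prod_filter_lt_mul_swap, sq, hw]
  have inner_ne_zero : ∏ i ∈ I, ∏ j ∈ I with i < j, w i j ^ 2 ≠ 0 :=
    prod_ne_zero_iff.2 fun i _ => prod_ne_zero_iff.2 fun j hj =>
      pow_ne_zero 2 (hw₀ i j (mem_filter.1 hj).2.ne)
  simp only [prod_inv_distrib]
  rw [prod_prod_erase_eq_mul_cutWeight, inner, inv_mul_cancel_left₀ inner_ne_zero]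

end CutWeight

section SubsetExpSum

variable {ι : Type*} [Fintype ι] {c : Finset ι → ℝ}

/-- The exponential sum `∑ I, c I * exp (∑ i ∈ I, k i * x)` over all subsets `I` of a finite type,
which is the shape of an `N`-soliton tau function restricted to a fixed time. -/
noncomputable def subsetExpSum (c : Finset ι → ℝ) (k : ι → ℝ) (x : ℝ) : ℝ :=
  ∑ I : Finset ι, c I * Real.exp (∑ i ∈ I, k i * x)

lemma subsetExpSum_pos (hc : ∀ I, 0 < c I) (k : ι → ℝ) (x : ℝ) : 0 < subsetExpSum c k x :=
  sum_pos (fun I _ => mul_pos (hc I) (Real.exp_pos _)) univ_nonempty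

lemma differentiable_subsetExpSum (c : Finset ι → ℝ) (k : ι → ℝ) :
    Differentiable ℝ (subsetExpSum c k) := by
  unfold subsetExpSum
  fun_prop

lemma subsetExpSum_neg [DecidableEq ι] (hc : ∀ I, c Iᶜ = c I) (k : ι → ℝ) (x : ℝ) :
    subsetExpSum c k (-x) = Real.exp ((-∑ i, k i) * x) * subsetExpSum c k x := by
  rw [subsetExpSum, subsetExpSum, mul_sum]
  refine Fintype.sum_equiv (Equiv.ofBijective _ compl_bijective) _ _ fun I => ?_
  have exponent : ∑ i ∈ I, k i * -x = (-∑ i, k i) * x + ∑ i ∈ Iᶜ, k i * x := by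
    rw [← sum_add_sum_compl I k, ← sum_mul, ← sum_mul]
    ring
  rw [Equiv.ofBijective_apply, hc, exponent, Real.exp_add, mul_left_comm]

end SubsetExpSum

section LogDerivative

lemma iteratedDeriv_two_linear_add {𝕜 : Type*} [NontriviallyNormedField 𝕜] {g : 𝕜 → 𝕜}
    (hg : Differentiable 𝕜 g) (a : 𝕜) :
    iteratedDeriv 2 (fun y => a * y + g y) = iteratedDeriv 2 g := by
  have deriv_add_const : deriv (fun y => a * y + g y) = fun y => a + deriv g y := by
    funext y
    exact (((hasDerivAt_id y).const_mul a).add (hg y).hasDerivAt).deriv.trans (by rw [mul_one])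
  funext x
  simp only [iteratedDeriv_succ, iteratedDeriv_zero, deriv_add_const, deriv_const_add]

lemma even_iteratedDeriv_two_log {f : ℝ → ℝ} (hf : Differentiable ℝ f) (hf₀ : ∀ x, f x ≠ 0)
    {a : ℝ} (hneg : ∀ x, f (-x) = Real.exp (a * x) * f x) :
    (iteratedDeriv 2 fun y => Real.log (f y)).Even := by
  intro x
  have log_neg : (fun y => Real.log (f (-y))) = fun y => a * y + Real.log (f y) := by
    funext y
    rw [hneg, Real.log_mul (Real.exp_ne_zero _) (hf₀ y), Real.log_exp]
  calc iteratedDeriv 2 (fun y => Real.log (f y)) (-x)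
      = iteratedDeriv 2 (fun y => Real.log (f (-y))) x := by
        simp [iteratedDeriv_comp_neg 2 fun y => Real.log (f y)]
    _ = iteratedDeriv 2 (fun y => Real.log (f y)) x := by
        rw [log_neg, iteratedDeriv_two_linear_add (hf.log hf₀)]

end LogDerivative

section Soliton

variable {ι : Type*} (κ : ι → ℝ)

/-- The factor `|(κ i + κ j) / (κ i - κ j)|`, whose logarithm gives the phase shift of two solitons
with parameters `κ i` and `κ j` when they cross. On the diagonal it is `0` by the convention for
division by zero. -/
noncomputable def phaseFactor (i j : ι) : ℝ :=
  |(κ i + κ j) / (κ i - κ j)|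

lemma phaseFactor_comm (i j : ι) : phaseFactor κ i j = phaseFactor κ j i := by
  rw [phaseFactor, phaseFactor, abs_div, abs_div, abs_sub_comm, add_comm]

lemma inv_phaseFactor_sq (i j : ι) :
    (phaseFactor κ i j ^ 2)⁻¹ = (κ i - κ j) ^ 2 / (κ i + κ j) ^ 2 := by
  rw [phaseFactor, sq_abs, div_pow, inv_div]

variable {κ}

lemma phaseFactor_pos {i j : ι} (h : κ i ^ 2 ≠ κ j ^ 2) : 0 < phaseFactor κ i j := by
  have factors_ne_zero : (κ i + κ j) * (κ i - κ j) ≠ 0 := by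
    rwa [← sq_sub_sq, sub_ne_zero]
  exact abs_pos.2 (div_ne_zero (left_ne_zero_of_mul factors_ne_zero)
    (right_ne_zero_of_mul factors_ne_zero))

theorem symmetric_nsoliton_potential_is_even_general [Fintype ι] [LinearOrder ι]
    (hκ : Function.Injective fun i => κ i ^ 2)
    (q : ι → ℝ)
    (hq : ∀ n, q n = ∏ m ∈ univ.erase n, |(κ n + κ m) / (κ n - κ m)|)
    (A : ℝ → ℝ)
    (hA : A = fun x => ∑ I : Finset ι,
        (∏ i ∈ I, ∏ j ∈ I.filter (fun j => i < j),
            ((κ i - κ j) ^ 2 / (κ i + κ j) ^ 2)) *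
          ∏ i ∈ I, q i * Real.exp (-2 * κ i * x))
    (u : ℝ → ℝ)
    (hu : u = fun x => -2 * iteratedDeriv 2 (fun y => Real.log (A y)) x) :
    u.Even := by
  have factor_pos (i j : ι) (hij : i ≠ j) : 0 < phaseFactor κ i j := phaseFactor_pos (hκ.ne hij)
  have A_eq : A = subsetExpSum (cutWeight (phaseFactor κ)) (fun i => -2 * κ i) := by
    funext x
    rw [hA, subsetExpSum]
    refine sum_congr rfl fun I _ => ?_
    rw [← prod_inv_sq_mul_prod_prod_erase (phaseFactor_comm κ) fun i j h => (factor_pos i j h).ne',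
      prod_mul_distrib, ← mul_assoc, ← Real.exp_sum]
    simp only [inv_phaseFactor_sq, hq]
    rfl
  have log_even : (iteratedDeriv 2 fun y => Real.log (A y)).Even := by
    rw [A_eq]
    exact even_iteratedDeriv_two_log (differentiable_subsetExpSum _ _)
      (fun x => (subsetExpSum_pos (cutWeight_pos factor_pos) _ x).ne')
      (subsetExpSum_neg (cutWeight_compl (phaseFactor_comm κ)) _)
  intro x
  simp only [hu, log_even x]

end Soliton

/-- For the symmetric choice of phases `q_n = ∏_{m≠n} |(κ_n+κ_m)/(κ_n−κ_m)|`,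
the `N`-soliton potential `u = -2 (log A)''` is an even function. -/
theorem symmetric_nsoliton_potential_is_even (N : ℕ) (hN : 0 < N) (κ : Fin N → ℝ)
    (hpos : ∀ n, 0 < κ n) (hinj : Function.Injective κ)
    (q : Fin N → ℝ)
    (hq : ∀ n, q n = ∏ m ∈ univ.erase n, |(κ n + κ m) / (κ n - κ m)|)
    (A : ℝ → ℝ)
    (hA : A = fun x => ∑ I : Finset (Fin N),
        (∏ i ∈ I, ∏ j ∈ I.filter (fun j => i < j),
            ((κ i - κ j) ^ 2 / (κ i + κ j) ^ 2)) *
          ∏ i ∈ I, q i * Real.exp (-2 * κ i * x))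
    (u : ℝ → ℝ)
    (hu : u = fun x => -2 * iteratedDeriv 2 (fun y => Real.log (A y)) x) :
    ∀ x : ℝ, u (-x) = u x := by
  have sq_injective : Function.Injective fun i => κ i ^ 2 := fun i j h =>
    hinj ((sq_eq_sq₀ (hpos i).le (hpos j).le).1 h)
  exact symmetric_nsoliton_potential_is_even_general sq_injective q hq A hA u hu
end

section
/- Let A < B be real numbers, let f : [A,B] → ℝ be Hölder continuous with exponent γ ∈ (0,1], and let s ∈ (A,B). Then lim_{ε→0⁺} ∫_A^B f(r)/(r − s − iε) dr = PV ∫_A^B f(r)/(r−s) dr + iπ f(s), and lim_{ε→0⁺} ∫_A^B f(r)/(r − s + iε) dr = PV ∫_A^B f(r)/(r−s) dr − iπ f(s), where the integrals on the left are complex-valued Lebesgue integrals. -/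
open Filter Topology intervalIntegral Complex

/-! Subtract the value at the singularity: `f r = (r - s) • slope f s r + f s`. Against the kernels
`1 / (r - s ∓ iε)` the first term gives integrands dominated by `‖slope f s r‖`, which is integrable
when `f` is Hölder at `s`, so dominated convergence applies and no jump arises. The constant `f s`
is integrated with an explicit primitive, the complex logarithm: as `ε → 0⁺` its value at the right
end point tends to `log (B - s)`, while at the left end point the branch cut is approached from one
side, which produces the `± iπ`. -/

open MeasureTheory Set
open scoped Interval NNReal

section PrincipalValue

variable {E F : Type*} [NormedAddCommGroup E] [NormedSpace ℝ E] [NormedAddCommGroup F]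
  [NormedSpace ℝ F] {f : ℝ → E} {A B s : ℝ}

/-- The Cauchy principal value of `∫ r in A..B, (r - s)⁻¹ • f r` for `s ∈ Ioo A B`, in regularized
form: `(r - s)⁻¹ • f r` is split into `slope f s r`, assumed integrable, and `(r - s)⁻¹ • f s`.
Since `Real.log x = log |x|`, the coefficient of `f s` is `log ((B - s) / (s - A))`.
That this is the limit of the truncated integrals is `tendsto_principalValue`. -/
noncomputable def principalValue (f : ℝ → E) (A B s : ℝ) : E :=
  (∫ r in A..B, slope f s r) + (Real.log (B - s) - Real.log (A - s)) • f s

lemma tendsto_integral_compl_Ioo {g : ℝ → E} (hg : IntervalIntegrable g volume A B)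
    (hs : s ∈ Ioo A B) :
    Tendsto (fun ε : ℝ => (∫ r in A..(s - ε), g r) + ∫ r in (s + ε)..B, g r) (𝓝[>] 0)
      (𝓝 (∫ r in A..B, g r)) := by
  have hs' : s ∈ [[A, B]] := Icc_subset_uIcc (Ioo_subset_Icc_self hs)
  have hnhds : [[A, B]] ∈ 𝓝 s := mem_of_superset (Icc_mem_nhds hs.1 hs.2) Icc_subset_uIcc
  have hleft : ContinuousAt (fun x => ∫ r in A..x, g r) s :=
    (continuousOn_primitive_interval' hg left_mem_uIcc).continuousAt hnhds
  have hright : ContinuousAt (fun x => ∫ r in x..B, g r) s :=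
    ((continuousOn_primitive_interval' hg right_mem_uIcc).continuousAt hnhds).neg.congr
      (.of_forall fun x => (integral_symm B x).symm)
  have hsub : Tendsto (fun ε : ℝ => s - ε) (𝓝[>] 0) (𝓝 s) :=
    tendsto_nhdsWithin_of_tendsto_nhds (Continuous.tendsto' (by fun_prop) _ _ (sub_zero s))
  have hadd : Tendsto (fun ε : ℝ => s + ε) (𝓝[>] 0) (𝓝 s) :=
    tendsto_nhdsWithin_of_tendsto_nhds (Continuous.tendsto' (by fun_prop) _ _ (add_zero s))
  rw [← integral_add_adjacent_intervals (hg.mono_set (uIcc_subset_uIcc_left hs'))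
    (hg.mono_set (uIcc_subset_uIcc_right hs'))]
  exact (hleft.tendsto.comp hsub).add (hright.tendsto.comp hadd)

lemma integral_inv_sub_of_notMem {a b : ℝ} (hs : s ∉ [[a, b]]) :
    ∫ r in a..b, (r - s)⁻¹ = Real.log (b - s) - Real.log (a - s) := by
  have ha : a - s ≠ 0 := sub_ne_zero.2 fun h => hs (h ▸ left_mem_uIcc)
  have hb : b - s ≠ 0 := sub_ne_zero.2 fun h => hs (h ▸ right_mem_uIcc)
  have h0 : (0 : ℝ) ∉ [[a - s, b - s]] := by
    rwa [← sub_self s, ← mem_preimage (f := fun x => x - s), preimage_sub_const_uIcc,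
      sub_add_cancel, sub_add_cancel]
  rw [integral_comp_sub_right (fun x => x⁻¹) s, integral_inv h0, Real.log_div hb ha]

lemma integral_inv_sub_smul_of_notMem [CompleteSpace E] {a b : ℝ}
    (hf : IntervalIntegrable (slope f s) volume a b) (hs : s ∉ [[a, b]]) :
    ∫ r in a..b, (r - s)⁻¹ • f r =
      (∫ r in a..b, slope f s r) + (Real.log (b - s) - Real.log (a - s)) • f s := by
  have hinv : IntervalIntegrable (fun r => (r - s)⁻¹) volume a b :=
    ContinuousOn.intervalIntegrable <| ContinuousOn.inv₀ (by fun_prop) fun r hr =>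
      sub_ne_zero.2 fun h => hs (h ▸ hr)
  have hsplit (r : ℝ) : (r - s)⁻¹ • f r = slope f s r + (r - s)⁻¹ • f s := by
    rw [slope_def_module, ← smul_add, sub_add_cancel]
  simp_rw [hsplit]
  rw [intervalIntegral.integral_add hf (hinv.smul_continuousOn continuousOn_const),
    intervalIntegral.integral_smul_const, integral_inv_sub_of_notMem hs]

theorem tendsto_principalValue [CompleteSpace E] (hs : s ∈ Ioo A B)
    (hf : IntervalIntegrable (slope f s) volume A B) :
    Tendsto (fun ε : ℝ =>
        (∫ r in A..(s - ε), (r - s)⁻¹ • f r) + ∫ r in (s + ε)..B, (r - s)⁻¹ • f r)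
      (𝓝[>] 0) (𝓝 (principalValue f A B s)) := by
  refine ((tendsto_integral_compl_Ioo hf hs).add_const _).congr' ?_
  filter_upwards [Ioo_mem_nhdsGT (sub_pos.2 hs.1), Ioo_mem_nhdsGT (sub_pos.2 hs.2)]
    with ε ⟨hε, hεA⟩ ⟨_, hεB⟩
  have hA : A ≤ s - ε := by linarith
  have hB : s + ε ≤ B := by linarith
  have hAB : A ≤ B := (hs.1.trans hs.2).le
  have hleft : s ∉ [[A, s - ε]] := by
    rw [uIcc_of_le hA]; exact fun h => by linarith [h.2]
  have hright : s ∉ [[s + ε, B]] := by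
    rw [uIcc_of_le hB]; exact fun h => by linarith [h.1]
  rw [integral_inv_sub_smul_of_notMem (hf.mono_set ?_) hleft,
    integral_inv_sub_smul_of_notMem (hf.mono_set ?_) hright,
    sub_sub_cancel_left, add_sub_cancel_left, Real.log_neg_eq_log]
  · module
  · rw [uIcc_of_le hAB, uIcc_of_le hB]
    exact Icc_subset_Icc_left (by linarith)
  · rw [uIcc_of_le hAB, uIcc_of_le hA]
    exact Icc_subset_Icc_right (by linarith)

lemma slope_comp_continuousLinearMap (ι : E →L[ℝ] F) (f : ℝ → E) (s : ℝ) :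
    slope (ι ∘ f) s = ι ∘ slope f s :=
  funext (ι.toLinearMap.slope_comp f s)

lemma principalValue_comp [CompleteSpace E] [CompleteSpace F] (ι : E →L[ℝ] F)
    (hf : IntervalIntegrable (slope f s) volume A B) :
    principalValue (ι ∘ f) A B s = ι (principalValue f A B s) := by
  simp only [principalValue, slope_comp_continuousLinearMap, Function.comp_apply,
    ι.intervalIntegral_comp_comm hf, map_add, map_smul]

end PrincipalValue

section CauchyKernel

variable {A B s : ℝ}

lemma integral_inv_sub_of_im_ne_zero {w : ℂ} (hw : w.im ≠ 0) :
    ∫ r in A..B, ((r : ℂ) - w)⁻¹ = log (B - w) - log (A - w) := by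
  have hslit (r : ℝ) : (r : ℂ) - w ∈ slitPlane := by simp [mem_slitPlane_iff, hw]
  refine integral_eq_sub_of_hasDerivAt (f := fun r : ℝ => log (r - w)) (fun r _ => ?_) ?_
  · have hderiv : HasDerivAt (fun r : ℝ => (r : ℂ) - w) 1 r :=
      ofRealCLM.hasDerivAt.sub_const w
    simpa only [one_div] using hderiv.clog_real (hslit r)
  · exact (Continuous.inv₀ (by fun_prop) fun r => slitPlane_ne_zero (hslit r)).intervalIntegrable ..

lemma tendsto_ofReal_sub_mul_I (x : ℝ) : Tendsto (fun ε : ℝ => (x : ℂ) - ε * I) (𝓝 0) (𝓝 x) :=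
  Continuous.tendsto' (by fun_prop) _ _ (by simp)

lemma tendsto_log_sub_mul_I_nhdsGT {x : ℝ} (hx : x < 0) :
    Tendsto (fun ε : ℝ => log (x - ε * I)) (𝓝[>] 0) (𝓝 (Real.log x - Real.pi * I)) := by
  have h := tendsto_log_nhdsWithin_im_neg_of_re_neg_of_im_zero (z := x) hx (ofReal_im x)
  rw [norm_real, Real.norm_eq_abs, Real.log_abs] at h
  refine h.comp (tendsto_nhdsWithin_iff.2
    ⟨tendsto_nhdsWithin_of_tendsto_nhds (tendsto_ofReal_sub_mul_I x), ?_⟩)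
  filter_upwards [self_mem_nhdsWithin] with ε hε
  simpa using hε

lemma tendsto_log_sub_mul_I_nhdsLT {x : ℝ} (hx : x < 0) :
    Tendsto (fun ε : ℝ => log (x - ε * I)) (𝓝[<] 0) (𝓝 (Real.log x + Real.pi * I)) := by
  have h := tendsto_log_nhdsWithin_im_nonneg_of_re_neg_of_im_zero (z := x) hx (ofReal_im x)
  rw [norm_real, Real.norm_eq_abs, Real.log_abs] at h
  refine h.comp (tendsto_nhdsWithin_iff.2
    ⟨tendsto_nhdsWithin_of_tendsto_nhds (tendsto_ofReal_sub_mul_I x), ?_⟩)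
  filter_upwards [self_mem_nhdsWithin] with ε hε
  simpa using le_of_lt hε

lemma tendsto_integral_inv_sub_mul_I {l : Filter ℝ} (hl : l ≤ 𝓝[≠] 0) (hB : s < B) {c : ℂ}
    (hA : Tendsto (fun ε : ℝ => log ((A - s : ℝ) - ε * I)) l (𝓝 c)) :
    Tendsto (fun ε : ℝ => ∫ r in A..B, ((r : ℂ) - s - ε * I)⁻¹) l
      (𝓝 (Real.log (B - s) - c)) := by
  have hlogB : Tendsto (fun ε : ℝ => log ((B - s : ℝ) - ε * I)) l (𝓝 (Real.log (B - s))) := by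
    rw [ofReal_log (sub_pos.2 hB).le]
    exact ((tendsto_ofReal_sub_mul_I _).mono_left (hl.trans nhdsWithin_le_nhds)).clog
      (ofReal_mem_slitPlane.2 (sub_pos.2 hB))
  refine (hlogB.sub hA).congr' ?_
  filter_upwards [hl self_mem_nhdsWithin] with ε hε
  have him : ((s : ℂ) + ε * I).im ≠ 0 := by simpa using hε
  simp only [ofReal_sub, sub_sub, integral_inv_sub_of_im_ne_zero him]

end CauchyKernel

section CauchyIntegral

variable {E : Type*} [NormedAddCommGroup E] [NormedSpace ℂ E] {f : ℝ → E} {A B s : ℝ}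

lemma inv_sub_mul_I_smul_sub (f : ℝ → E) (s ε r : ℝ) :
    ((r : ℂ) - s - ε * I)⁻¹ • (f r - f s) =
      (((r : ℂ) - s - ε * I)⁻¹ * (r - s : ℝ)) • slope f s r := by
  rw [mul_smul, coe_smul, sub_smul_slope, vsub_eq_sub]

lemma norm_inv_sub_mul_I_smul_sub_le (f : ℝ → E) (s ε r : ℝ) :
    ‖((r : ℂ) - s - ε * I)⁻¹ • (f r - f s)‖ ≤ ‖slope f s r‖ := by
  have hre : |r - s| ≤ ‖(r : ℂ) - s - ε * I‖ := by
    simpa using abs_re_le_norm ((r : ℂ) - s - ε * I)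
  rw [inv_sub_mul_I_smul_sub, norm_smul, norm_mul, norm_inv, norm_real, Real.norm_eq_abs]
  exact mul_le_of_le_one_left (norm_nonneg _) (inv_mul_le_one_of_le₀ hre (norm_nonneg _))

lemma intervalIntegrable_inv_sub_mul_I_smul_sub (hf : IntervalIntegrable (slope f s) volume A B)
    (ε : ℝ) :
    IntervalIntegrable (fun r : ℝ => ((r : ℂ) - s - ε * I)⁻¹ • (f r - f s)) volume A B := by
  refine hf.mono_fun ?_ (ae_of_all _ (norm_inv_sub_mul_I_smul_sub_le f s ε))
  simp only [inv_sub_mul_I_smul_sub]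
  have hm : Measurable fun r : ℝ => ((r : ℂ) - s - ε * I)⁻¹ * (r - s : ℝ) := by fun_prop
  exact hm.aestronglyMeasurable.smul hf.def'.aestronglyMeasurable

lemma tendsto_inv_sub_mul_I_smul_sub (f : ℝ → E) (s r : ℝ) :
    Tendsto (fun ε : ℝ => ((r : ℂ) - s - ε * I)⁻¹ • (f r - f s)) (𝓝 0) (𝓝 (slope f s r)) := by
  rcases eq_or_ne r s with rfl | hrs
  · simp
  · have h := ((tendsto_ofReal_sub_mul_I (r - s)).inv₀
      (ofReal_ne_zero.2 (sub_ne_zero.2 hrs))).smul_const (f r - f s)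
    rwa [← ofReal_inv, coe_smul, ← slope_def_module, ofReal_sub] at h

lemma tendsto_integral_inv_sub_mul_I_smul_sub
    (hf : IntervalIntegrable (slope f s) volume A B) :
    Tendsto (fun ε : ℝ => ∫ r in A..B, ((r : ℂ) - s - ε * I)⁻¹ • (f r - f s)) (𝓝 0)
      (𝓝 (∫ r in A..B, slope f s r)) :=
  tendsto_integral_filter_of_dominated_convergence (fun r => ‖slope f s r‖)
    (.of_forall fun ε =>
      (intervalIntegrable_inv_sub_mul_I_smul_sub hf ε).def'.aestronglyMeasurable)
    (.of_forall fun ε => ae_of_all _ fun r _ => norm_inv_sub_mul_I_smul_sub_le f s ε r)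
    hf.norm
    (ae_of_all _ fun r _ => tendsto_inv_sub_mul_I_smul_sub f s r)

lemma tendsto_integral_inv_sub_mul_I_smul [CompleteSpace E] {l : Filter ℝ} (hl : l ≤ 𝓝[≠] 0)
    (hf : IntervalIntegrable (slope f s) volume A B) {c : ℂ}
    (hc : Tendsto (fun ε : ℝ => ∫ r in A..B, ((r : ℂ) - s - ε * I)⁻¹) l (𝓝 c)) :
    Tendsto (fun ε : ℝ => ∫ r in A..B, ((r : ℂ) - s - ε * I)⁻¹ • f r) l
      (𝓝 ((∫ r in A..B, slope f s r) + c • f s)) := by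
  have hreg := (tendsto_integral_inv_sub_mul_I_smul_sub hf).mono_left (hl.trans nhdsWithin_le_nhds)
  refine (hreg.add (hc.smul_const (f s))).congr' ?_
  filter_upwards [hl self_mem_nhdsWithin] with ε hε
  have hne (r : ℝ) : (r : ℂ) - s - ε * I ≠ 0 := fun h => hε (by simpa using congrArg im h)
  have hker : IntervalIntegrable (fun r : ℝ => ((r : ℂ) - s - ε * I)⁻¹) volume A B :=
    (Continuous.inv₀ (by fun_prop) hne).intervalIntegrable ..
  rw [← intervalIntegral.integral_smul_const, ← intervalIntegral.integral_add
    (intervalIntegrable_inv_sub_mul_I_smul_sub hf ε) (hker.smul_continuousOn continuousOn_const)]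
  simp only [← smul_add, sub_add_cancel]

theorem tendsto_cauchyIntegral_nhdsGT [CompleteSpace E] (hs : s ∈ Ioo A B)
    (hf : IntervalIntegrable (slope f s) volume A B) :
    Tendsto (fun ε : ℝ => ∫ r in A..B, ((r : ℂ) - s - ε * I)⁻¹ • f r) (𝓝[>] 0)
      (𝓝 (principalValue f A B s + (Real.pi * I) • f s)) := by
  have hl : 𝓝[>] (0 : ℝ) ≤ 𝓝[≠] 0 := nhdsGT_le_nhdsNE 0
  convert! tendsto_integral_inv_sub_mul_I_smul hl hf (tendsto_integral_inv_sub_mul_I hl hs.2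
    (tendsto_log_sub_mul_I_nhdsGT (sub_neg.2 hs.1))) using 2
  rw [principalValue, ← coe_smul, ofReal_sub]
  module

theorem tendsto_cauchyIntegral_nhdsLT [CompleteSpace E] (hs : s ∈ Ioo A B)
    (hf : IntervalIntegrable (slope f s) volume A B) :
    Tendsto (fun ε : ℝ => ∫ r in A..B, ((r : ℂ) - s - ε * I)⁻¹ • f r) (𝓝[<] 0)
      (𝓝 (principalValue f A B s - (Real.pi * I) • f s)) := by
  have hl : 𝓝[<] (0 : ℝ) ≤ 𝓝[≠] 0 := nhdsLT_le_nhdsNE 0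
  convert! tendsto_integral_inv_sub_mul_I_smul hl hf (tendsto_integral_inv_sub_mul_I hl hs.2
    (tendsto_log_sub_mul_I_nhdsLT (sub_neg.2 hs.1))) using 2
  rw [principalValue, ← coe_smul, ofReal_sub]
  module

end CauchyIntegral

section Holder

variable {E : Type*} [NormedAddCommGroup E] [NormedSpace ℝ E] {f : ℝ → E} {A B s : ℝ}

lemma intervalIntegrable_abs_rpow {p : ℝ} (hp : -1 < p) (a b : ℝ) :
    IntervalIntegrable (fun x : ℝ => |x| ^ p) volume a b := by
  refine intervalIntegrable_of_even (fun x => by rw [abs_neg]) fun x hx => ?_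
  refine (intervalIntegrable_rpow' hp).congr fun r hr => ?_
  rw [uIoc_of_le hx.le] at hr
  simp only [abs_of_pos hr.1]

lemma intervalIntegrable_slope_of_norm_sub_le {C γ : ℝ} (hγ : 0 < γ)
    (hmeas : AEStronglyMeasurable f (volume.restrict (Ι A B)))
    (hf : ∀ r ∈ Ι A B, ‖f r - f s‖ ≤ C * |r - s| ^ γ) :
    IntervalIntegrable (slope f s) volume A B := by
  have hinv : Measurable fun r : ℝ => (r - s)⁻¹ := by fun_prop
  have hslope : AEStronglyMeasurable (slope f s) (volume.restrict (Ι A B)) :=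
    hinv.aestronglyMeasurable.smul (hmeas.sub aestronglyMeasurable_const)
  have hbound : IntervalIntegrable (fun r => C * |r - s| ^ (γ - 1)) volume A B := by
    have hγ' : -1 < γ - 1 := by linarith
    have h := (intervalIntegrable_abs_rpow hγ' (A - s) (B - s)).comp_sub_right s
    rw [sub_add_cancel, sub_add_cancel] at h
    exact h.const_mul C
  refine hbound.mono_fun' hslope ?_
  filter_upwards [ae_restrict_mem measurableSet_uIoc,
    ae_restrict_of_ae (compl_mem_ae_iff.2 (measure_singleton s))] with r hr hrs
  have hpos : 0 < |r - s| := abs_pos.2 (sub_ne_zero.2 hrs)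
  calc ‖slope f s r‖ = ‖f r - f s‖ / |r - s| := by
        rw [slope_def_module, norm_smul, norm_inv, Real.norm_eq_abs, inv_mul_eq_div]
    _ ≤ C * |r - s| ^ γ / |r - s| := by gcongr; exact hf r hr
    _ = C * |r - s| ^ (γ - 1) := by rw [Real.rpow_sub_one hpos.ne', mul_div_assoc]

lemma holderOnWith_of_dist_le {X Y : Type*} [PseudoMetricSpace X] [PseudoMetricSpace Y]
    {g : X → Y} {t : Set X} {C γ : ℝ≥0}
    (h : ∀ x ∈ t, ∀ y ∈ t, dist (g x) (g y) ≤ C * dist x y ^ (γ : ℝ)) :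
    HolderOnWith C γ g t := by
  intro x hx y hy
  rw [edist_nndist, edist_nndist, ← ENNReal.coe_rpow_of_nonneg _ γ.coe_nonneg]
  exact_mod_cast h x hx y hy

lemma intervalIntegrable_slope_of_holder {C γ : ℝ} (hC : 0 ≤ C) (hγ : 0 < γ)
    (hf : ∀ r ∈ Icc A B, ∀ r' ∈ Icc A B, ‖f r - f r'‖ ≤ C * |r - r'| ^ γ) (hs : s ∈ Icc A B) :
    IntervalIntegrable (slope f s) volume A B := by
  lift C to ℝ≥0 using hC
  lift γ to ℝ≥0 using hγ.le
  have hAB : A ≤ B := hs.1.trans hs.2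
  have hsub : Ι A B ⊆ Icc A B := uIoc_subset_uIcc.trans (uIcc_of_le hAB).subset
  have hholder : HolderOnWith C γ f (Icc A B) :=
    holderOnWith_of_dist_le (by simpa only [dist_eq_norm, Real.norm_eq_abs] using hf)
  have hcont : ContinuousOn f (Ι A B) :=
    (hholder.continuousOn (NNReal.coe_pos.1 hγ)).mono hsub
  exact intervalIntegrable_slope_of_norm_sub_le hγ (hcont.aestronglyMeasurable measurableSet_uIoc)
    fun r hr => hf r (hsub hr) s hs

end Holder

section SokhotskiPlemelj

variable {E F : Type*} [NormedAddCommGroup E] [NormedSpace ℝ E] [CompleteSpace E]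
  [NormedAddCommGroup F] [NormedSpace ℂ F] [CompleteSpace F] {f : ℝ → E} {A B s : ℝ}

/-- Applied with `ι = ofRealCLM` to real-valued `f`, and with `ι = .id ℝ F` to `f` valued in a
complex Banach space `F`. -/
theorem sokhotski_plemelj_general (ι : E →L[ℝ] F) (hs : s ∈ Ioo A B)
    (hf : IntervalIntegrable (slope f s) volume A B) :
    ∃ P : E,
      Tendsto (fun ε : ℝ =>
          (∫ r in A..(s - ε), (r - s)⁻¹ • f r) + ∫ r in (s + ε)..B, (r - s)⁻¹ • f r)
        (𝓝[>] 0) (𝓝 P) ∧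
      Tendsto (fun ε : ℝ => ∫ r in A..B, ((r : ℂ) - s - ε * I)⁻¹ • ι (f r))
        (𝓝[>] 0) (𝓝 (ι P + (Real.pi * I) • ι (f s))) ∧
      Tendsto (fun ε : ℝ => ∫ r in A..B, ((r : ℂ) - s + ε * I)⁻¹ • ι (f r))
        (𝓝[>] 0) (𝓝 (ι P - (Real.pi * I) • ι (f s))) := by
  have hιf : IntervalIntegrable (slope (ι ∘ f) s) volume A B := by
    rw [slope_comp_continuousLinearMap]
    exact ⟨ι.integrable_comp hf.1, ι.integrable_comp hf.2⟩
  have habove := tendsto_cauchyIntegral_nhdsGT hs hιf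
  have hbelow := (tendsto_cauchyIntegral_nhdsLT hs hιf).comp tendsto_neg_nhdsGT_neg
  rw [principalValue_comp ι hf] at habove hbelow
  refine ⟨principalValue f A B s, tendsto_principalValue hs hf, habove, ?_⟩
  simpa only [Function.comp_def, ofReal_neg, neg_mul, sub_neg_eq_add, neg_zero] using hbelow

end SokhotskiPlemelj

/-- Sokhotski–Plemelj formula on a finite interval: for Hölder continuous `f` and
`s ∈ (A,B)`, `lim_{ε→0⁺} ∫_A^B f(r)/(r−s∓iε) dr = PV ∫_A^B f(r)/(r−s) dr ± iπ f(s)`. -/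
theorem sokhotski_plemelj (A B : ℝ) (hAB : A < B) (f : ℝ → ℝ)
    (γ : ℝ) (hγ : γ ∈ Set.Ioc (0 : ℝ) 1) (C : ℝ) (hC : 0 ≤ C)
    (hf : ∀ r ∈ Set.Icc A B, ∀ r' ∈ Set.Icc A B, |f r - f r'| ≤ C * |r - r'| ^ γ)
    (s : ℝ) (hs : s ∈ Set.Ioo A B) :
    ∃ P : ℝ,
      Tendsto (fun ε : ℝ =>
          (∫ r in A..(s - ε), f r / (r - s)) + ∫ r in (s + ε)..B, f r / (r - s))
        (𝓝[>] 0) (𝓝 P) ∧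
      Tendsto (fun ε : ℝ =>
          ∫ r in A..B, (f r : ℂ) / ((r : ℂ) - (s : ℂ) - (ε : ℂ) * Complex.I))
        (𝓝[>] 0) (𝓝 ((P : ℂ) + (Real.pi : ℂ) * (f s : ℂ) * Complex.I)) ∧
      Tendsto (fun ε : ℝ =>
          ∫ r in A..B, (f r : ℂ) / ((r : ℂ) - (s : ℂ) + (ε : ℂ) * Complex.I))
        (𝓝[>] 0) (𝓝 ((P : ℂ) - (Real.pi : ℂ) * (f s : ℂ) * Complex.I)) := by
  have hslope := intervalIntegrable_slope_of_holder (f := f) hC hγ.1 hf (Ioo_subset_Icc_self hs)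
  simpa only [ofRealCLM_apply, smul_eq_mul, inv_mul_eq_div, mul_right_comm _ I] using
    sokhotski_plemelj_general ofRealCLM hs hslope
end

section
/- Let A < B be real numbers, let α ∈ (0,1), and let s ∈ (A,B). Then the principal value integral exists and (1/π) PV ∫_A^B ((r−A)/(B−r))^α / (r−s) dr = ( 1 − cos(πα) ((s−A)/(B−s))^α ) / sin(πα). -/
open Filter Topology intervalIntegral
open MeasureTheory Set Real

/-!
Let `w r = (r - A) ^ (α - 1) * (B - r) ^ (-α)`, so that the given weight is `(r - A) * w r`. Writing
`r - A = (r - s) + (s - A)` splits its Hilbert transform into the integral of `w`, a beta integral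
equal to `π / sin (π α)`, and `s - A` times the Hilbert transform of `w`.

Since `w` has total degree `-1`, the cross ratio `x` of `r` with `A, s, B` turns the part of
`∫ w r / (s - r)` to the left of `s` into `w s * ∫₀ᵘ x ^ (α - 1) / (1 - x)`, where `u → 1⁻`. This
diverges like `-log (1 - u)`, and its finite part is `-(ψ(α) + γ)` by Gauss's integral for the
digamma function. The reflection `r ↦ -r` treats the right part, with `1 - α` in place of `α`; the
logarithms cancel, so the reflection formula `ψ(1 - α) - ψ(α) = π cot (π α)` gives the principal
value `-π cot (π α) w s`.
-/

section PrincipalValue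

variable {E : Type*} [NormedAddCommGroup E] [NormedSpace ℝ E] {f g : ℝ → E} {A B s : ℝ} {I J : E}

/-- `HasPrincipalValue f A B s I` says that `I` is the Cauchy principal value at `s` of the
integral of `f` over `[A, B]`. Integrability away from `s` is part of the notion, so that neither
truncated integral takes the junk value `0`. -/
def HasPrincipalValue (f : ℝ → E) (A B s : ℝ) (I : E) : Prop :=
  (∀ᶠ ε in 𝓝[>] (0 : ℝ),
    IntervalIntegrable f volume A (s - ε) ∧ IntervalIntegrable f volume (s + ε) B) ∧
  Tendsto (fun ε : ℝ => (∫ r in A..(s - ε), f r) + ∫ r in (s + ε)..B, f r) (𝓝[>] 0) (𝓝 I)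

lemma HasPrincipalValue.add (hf : HasPrincipalValue f A B s I)
    (hg : HasPrincipalValue g A B s J) :
    HasPrincipalValue (fun r => f r + g r) A B s (I + J) := by
  refine ⟨?_, (hf.2.add hg.2).congr' ?_⟩
  · filter_upwards [hf.1, hg.1] with ε hfε hgε
    exact ⟨hfε.1.add hgε.1, hfε.2.add hgε.2⟩
  · filter_upwards [hf.1, hg.1] with ε hfε hgε
    rw [integral_add hfε.1 hgε.1, integral_add hfε.2 hgε.2]
    abel

lemma HasPrincipalValue.const_smul (hf : HasPrincipalValue f A B s I) (c : ℝ) :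
    HasPrincipalValue (fun r => c • f r) A B s (c • I) := by
  refine ⟨hf.1.mono fun ε hε => ⟨hε.1.smul c, hε.2.smul c⟩, ?_⟩
  simpa only [intervalIntegral.integral_smul, smul_add] using hf.2.const_smul c

lemma eventually_sub_add_mem_Ioo (hs : s ∈ Ioo A B) :
    ∀ᶠ ε in 𝓝[>] (0 : ℝ), s - ε ∈ Ioo A s ∧ s + ε ∈ Ioo s B := by
  filter_upwards [Ioo_mem_nhdsGT (sub_pos.2 hs.1), Ioo_mem_nhdsGT (sub_pos.2 hs.2)] with ε hA hB
  exact ⟨⟨by linarith [hA.2], by linarith [hA.1]⟩, ⟨by linarith [hB.1], by linarith [hB.2]⟩⟩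

lemma HasPrincipalValue.congr (hf : HasPrincipalValue f A B s I) (hs : s ∈ Ioo A B)
    (hfg : EqOn f g (Ioo A B \ {s})) : HasPrincipalValue g A B s I := by
  have hleft {ε : ℝ} (hε : s - ε ∈ Ioo A s) : EqOn f g (uIoo A (s - ε)) := by
    rw [uIoo_of_le hε.1.le]
    exact fun r hr => hfg ⟨⟨hr.1, hr.2.trans (hε.2.trans hs.2)⟩, (hr.2.trans hε.2).ne⟩
  have hright {ε : ℝ} (hε : s + ε ∈ Ioo s B) : EqOn f g (uIoo (s + ε) B) := by
    rw [uIoo_of_le hε.2.le]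
    exact fun r hr => hfg ⟨⟨hs.1.trans (hε.1.trans hr.1), hr.2⟩, (hε.1.trans hr.1).ne'⟩
  refine ⟨?_, hf.2.congr' ?_⟩
  · filter_upwards [hf.1, eventually_sub_add_mem_Ioo hs] with ε hfε hε
    exact ⟨hfε.1.congr_uIoo (hleft hε.1), hfε.2.congr_uIoo (hright hε.2)⟩
  · filter_upwards [eventually_sub_add_mem_Ioo hs] with ε hε
    rw [integral_congr_uIoo (hleft hε.1), integral_congr_uIoo (hright hε.2)]

lemma tendsto_sub_nhdsGT_zero (s : ℝ) : Tendsto (fun ε : ℝ => s - ε) (𝓝[>] 0) (𝓝 s) :=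
  ((continuous_sub_left s).tendsto' 0 s (sub_zero s)).mono_left nhdsWithin_le_nhds

lemma hasPrincipalValue_of_intervalIntegrable (hf : IntervalIntegrable f volume A B)
    (hs : s ∈ Ioo A B) : HasPrincipalValue f A B s (∫ r in A..B, f r) := by
  have hAB : A ≤ B := (hs.1.trans hs.2).le
  have hsub {a b : ℝ} (ha : a ∈ Icc A B) (hb : b ∈ Icc A B) : IntervalIntegrable f volume a b :=
    hf.mono_set (uIcc_of_le hAB ▸ uIcc_subset_Icc ha hb)
  have htrunc : ∀ᶠ ε in 𝓝[>] (0 : ℝ), s - ε ∈ Icc A B ∧ s + ε ∈ Icc A B := by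
    filter_upwards [eventually_sub_add_mem_Ioo hs] with ε hε
    exact ⟨⟨hε.1.1.le, (hε.1.2.trans hs.2).le⟩, ⟨(hs.1.trans hε.2.1).le, hε.2.2.le⟩⟩
  have hA : A ∈ Icc A B := left_mem_Icc.2 hAB
  have hB : B ∈ Icc A B := right_mem_Icc.2 hAB
  refine ⟨htrunc.mono fun ε hε => ⟨hsub hA hε.1, hsub hε.2 hB⟩, ?_⟩
  have hprim : ContinuousAt (fun b => ∫ r in A..b, f r) s :=
    (continuousOn_primitive_interval' hf left_mem_uIcc).continuousAt
      (uIcc_of_le hAB ▸ Icc_mem_nhds hs.1 hs.2)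
  have hplus : Tendsto (fun ε : ℝ => s + ε) (𝓝[>] 0) (𝓝 s) :=
    ((continuous_const_add s).tendsto' 0 s (add_zero s)).mono_left nhdsWithin_le_nhds
  have hlim := ((hprim.tendsto.comp (tendsto_sub_nhdsGT_zero s)).sub
    (hprim.tendsto.comp hplus)).add_const (∫ r in A..B, f r)
  rw [sub_self, zero_add] at hlim
  refine hlim.congr' (htrunc.mono fun ε hε => ?_)
  rw [← integral_add_adjacent_intervals (hsub hA hε.2) (hsub hε.2 hB)]
  simp only [Function.comp_apply]
  abel

lemma intervalIntegrable_div_sub {f : ℝ → ℝ} {a b : ℝ} (hf : IntervalIntegrable f volume a b)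
    (hs : s ∉ uIcc a b) : IntervalIntegrable (fun r => f r / (r - s)) volume a b := by
  simp only [div_eq_mul_inv]
  refine hf.mul_continuousOn (ContinuousOn.inv₀ (by fun_prop) fun r hr => ?_)
  exact sub_ne_zero.2 fun h => hs (h ▸ hr)

end PrincipalValue

section Digamma

/-- Gauss's integral for `ψ(a) + γ`, where `ψ` is the digamma function and `γ` is Euler's constant;
it converges for `0 < a`. -/
noncomputable def gaussDigamma (a : ℝ) : ℝ :=
  ∫ x in (0 : ℝ)..1, (1 - x ^ (a - 1)) / (1 - x)

variable {a : ℝ}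

lemma intervalIntegrable_one_sub_rpow_div_one_sub (ha : 0 < a) :
    IntervalIntegrable (fun x : ℝ => (1 - x ^ (a - 1)) / (1 - x)) volume 0 1 := by
  have near_zero : IntervalIntegrable (fun x : ℝ => (1 - x ^ (a - 1)) / (1 - x)) volume 0 2⁻¹ := by
    simp only [div_eq_mul_inv]
    refine (intervalIntegrable_const.sub (intervalIntegrable_rpow' (by linarith))).mul_continuousOn
      (ContinuousOn.inv₀ (by fun_prop) fun x hx => ?_)
    rw [uIcc_of_le (by norm_num)] at hx
    linarith [hx.2]
  have hdiff : DifferentiableAt ℝ (fun x : ℝ => x ^ (a - 1)) 1 :=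
    differentiableAt_rpow_const_of_ne _ one_ne_zero
  have near_one : IntervalIntegrable (dslope (fun x : ℝ => x ^ (a - 1)) 1) volume 2⁻¹ 1 := by
    have hcont : ContinuousOn (dslope (fun x : ℝ => x ^ (a - 1)) 1) (Ioi 0) :=
      (continuousOn_dslope (Ioi_mem_nhds one_pos)).2
        ⟨continuousOn_id.rpow_const fun x hx => Or.inl (ne_of_gt hx), hdiff⟩
    refine (hcont.mono fun x hx => ?_).intervalIntegrable
    rw [uIcc_of_le (by norm_num)] at hx
    exact lt_of_lt_of_le (by norm_num) hx.1
  refine near_zero.trans (near_one.congr_uIoo fun x hx => ?_)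
  rw [uIoo_of_le (by norm_num)] at hx
  rw [dslope_of_ne _ hx.2.ne, slope_def_field, one_rpow, ← neg_sub x 1, ← neg_sub (x ^ (a - 1)) 1,
    neg_div_neg_eq]

lemma integral_rpow_sub_one (ha : 0 < a) : ∫ x in (0 : ℝ)..1, x ^ (a - 1) = 1 / a := by
  rw [integral_rpow (Or.inl (by linarith))]
  simp [ha.ne']

lemma gaussDigamma_add_one (ha : 0 < a) : gaussDigamma (a + 1) = gaussDigamma a + 1 / a := by
  rw [gaussDigamma, gaussDigamma, ← integral_rpow_sub_one ha, ← integral_add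
    (intervalIntegrable_one_sub_rpow_div_one_sub ha) (intervalIntegrable_rpow' (by linarith))]
  refine integral_congr_Ioo_of_le zero_le_one fun x hx => ?_
  have hx1 : 1 - x ≠ 0 := (sub_pos.2 hx.2).ne'
  have hpow : x ^ (a + 1 - 1) = x ^ (a - 1) * x := by
    rw [← rpow_add_one hx.1.ne']; ring_nf
  rw [hpow]
  field_simp
  ring

lemma hasSum_gaussDigamma (ha : 0 < a) :
    HasSum (fun n : ℕ => 1 / ((n : ℝ) + 1) - 1 / (n + a)) (gaussDigamma a) := by
  have hterm (n : ℕ) : ∫ x in (0 : ℝ)..1, x ^ n * (1 - x ^ (a - 1)) =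
      1 / ((n : ℝ) + 1) - 1 / (n + a) := by
    have hna : 0 < n + a := by positivity
    rw [← integral_rpow_sub_one hna, ← integral_rpow_sub_one (a := (n : ℝ) + 1) (by positivity),
      ← integral_sub (intervalIntegrable_rpow' (by linarith))
        (intervalIntegrable_rpow' (by linarith))]
    refine integral_congr_Ioo_of_le zero_le_one fun x hx => ?_
    rw [add_sub_cancel_right, add_sub_assoc, rpow_add hx.1, rpow_natCast]
    ring
  have hgeom {x : ℝ} (hx : x ∈ Ioo (0 : ℝ) 1) (c : ℝ) :
      HasSum (fun n : ℕ => x ^ n * c) (c / (1 - x)) := by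
    simpa only [div_eq_inv_mul] using (hasSum_geometric_of_lt_one hx.1.le hx.2).mul_right c
  simp only [← hterm, gaussDigamma]
  simp only [integral_of_le zero_le_one, integral_Ioc_eq_integral_Ioo]
  refine MeasureTheory.hasSum_integral_of_dominated_convergence
    (fun n x => x ^ n * |1 - x ^ (a - 1)|) (fun n => by fun_prop) (fun n => ?_) ?_ ?_ ?_
  · refine ae_restrict_of_forall_mem measurableSet_Ioo fun x hx => ?_
    rw [norm_mul, norm_of_nonneg (pow_nonneg hx.1.le n), norm_eq_abs]
  · exact ae_restrict_of_forall_mem measurableSet_Ioo fun x hx => (hgeom hx _).summable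
  · have hint := (intervalIntegrable_iff_integrableOn_Ioo_of_le zero_le_one).1
      (intervalIntegrable_one_sub_rpow_div_one_sub ha)
    refine IntegrableOn.congr_fun hint.norm (fun x hx => ?_) measurableSet_Ioo
    rw [(hgeom hx _).tsum_eq, norm_div, norm_of_nonneg (sub_pos.2 hx.2).le, norm_eq_abs]
  · exact ae_restrict_of_forall_mem measurableSet_Ioo fun x hx => hgeom hx _

lemma tendsto_sum_cot (ha : (a : ℂ) ∈ Complex.integerComplement) :
    Tendsto (fun N : ℕ => ∑ n ∈ Finset.range N, (1 / (a - ((n : ℝ) + 1)) + 1 / (a + (n + 1))))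
      atTop (𝓝 (π * cot (π * a) - 1 / a)) := by
  rw [← tendsto_ofReal_iff]
  convert! tendsto_logDeriv_euler_cot_sub ha using 2
  · simp only [Complex.ofReal_sum, cotTerm]
    push_cast
    rfl
  · push_cast
    rfl

lemma gaussDigamma_one_sub_sub_gaussDigamma (ha : a ∈ Ioo (0 : ℝ) 1) :
    gaussDigamma (1 - a) - gaussDigamma a = π * cot (π * a) := by
  have hcompl : (a : ℂ) ∈ Complex.integerComplement := by
    rintro ⟨k, hk⟩
    obtain rfl : (k : ℝ) = a := by exact_mod_cast hk
    have h0 : 0 < k := by exact_mod_cast ha.1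
    have h1 : k < 1 := by exact_mod_cast ha.2
    omega
  have hsum := (hasSum_gaussDigamma (sub_pos.2 ha.2)).sub
    (hasSum_gaussDigamma (add_pos ha.1 one_pos))
  have hlim : gaussDigamma (1 - a) - gaussDigamma (a + 1) = π * cot (π * a) - 1 / a := by
    refine tendsto_nhds_unique hsum.tendsto_sum_nat ((tendsto_sum_cot hcompl).congr fun N => ?_)
    refine Finset.sum_congr rfl fun n _ => ?_
    rw [← neg_sub _ a, one_div_neg_eq_neg_one_div, add_sub_assoc, add_left_comm a]
    ring
  rw [gaussDigamma_add_one ha.1] at hlim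
  linarith

lemma tendsto_integral_rpow_div_one_sub_add_log (ha : 0 < a) :
    Tendsto (fun u : ℝ => (∫ x in (0 : ℝ)..u, x ^ (a - 1) / (1 - x)) + log (1 - u)) (𝓝[<] 1)
      (𝓝 (-gaussDigamma a)) := by
  have hint := intervalIntegrable_one_sub_rpow_div_one_sub ha
  have hprim : Tendsto (fun u : ℝ => ∫ x in (0 : ℝ)..u, (1 - x ^ (a - 1)) / (1 - x)) (𝓝[<] 1)
      (𝓝 (gaussDigamma a)) := by
    have h := continuousOn_primitive_interval' hint left_mem_uIcc 1 right_mem_uIcc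
    rw [uIcc_of_le zero_le_one] at h
    exact h.mono_left (nhdsWithin_le_of_mem (Icc_mem_nhdsLT one_pos))
  refine hprim.neg.congr' ?_
  filter_upwards [Ioo_mem_nhdsLT one_pos] with u hu
  have hne {x : ℝ} (hx : x ∈ uIcc 0 u) : 1 - x ≠ 0 := by
    rw [uIcc_of_le hu.1.le] at hx
    linarith [hx.2, hu.2]
  have hlog : ∫ x in (0 : ℝ)..u, 1 / (1 - x) = -log (1 - u) := by
    rw [integral_comp_sub_left (fun y => 1 / y) 1, integral_one_div_of_pos (by linarith [hu.2])
      (by norm_num)]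
    simp [log_inv]
  have hint_inv : IntervalIntegrable (fun x : ℝ => 1 / (1 - x)) volume 0 u :=
    (continuousOn_const.div (by fun_prop) fun x hx => hne hx).intervalIntegrable
  have hint_u := hint.mono_set (uIcc_subset_uIcc_left (Icc_subset_uIcc ⟨hu.1.le, hu.2.le⟩))
  have hsub : ∫ x in (0 : ℝ)..u, x ^ (a - 1) / (1 - x) =
      -log (1 - u) - ∫ x in (0 : ℝ)..u, (1 - x ^ (a - 1)) / (1 - x) := by
    rw [← hlog, ← integral_sub hint_inv hint_u]
    exact integral_congr fun x _ => by ring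
  rw [hsub]
  ring

end Digamma

section JacobiWeight

/-- The Jacobi weight on `[A, B]` with exponents `α - 1` at `A` and `-α` at `B`. The exponents have
sum `-1`, which makes `jacobiWeight A B α r / (s - r) dr` covariant under Möbius maps. -/
noncomputable def jacobiWeight (A B α r : ℝ) : ℝ :=
  (r - A) ^ (α - 1) * (B - r) ^ (-α)

/-- The Möbius map sending `A`, `s`, `B` to `0`, `1`, `∞`, evaluated at `r`. -/
noncomputable def crossRatio (A B s r : ℝ) : ℝ :=
  (r - A) * (B - s) / ((B - r) * (s - A))

variable {A B α r s t : ℝ}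

lemma jacobiWeight_neg : jacobiWeight (-B) (-A) (1 - α) (-r) = jacobiWeight A B α r := by
  unfold jacobiWeight
  ring_nf

lemma sub_mul_jacobiWeight (hr : r ∈ Ioo A B) :
    (r - A) * jacobiWeight A B α r = ((r - A) / (B - r)) ^ α := by
  have hA : 0 < r - A := sub_pos.2 hr.1
  have hB : 0 < B - r := sub_pos.2 hr.2
  rw [jacobiWeight, div_rpow hA.le hB.le, rpow_sub_one hA.ne', rpow_neg hB.le]
  field_simp

lemma integral_rpow_mul_rpow {u v : ℝ} (hu : 0 < u) (hv : 0 < v) (hAB : A < B) :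
    ∫ r in A..B, (r - A) ^ (u - 1) * (B - r) ^ (v - 1) =
      (B - A) ^ (u + v - 1) * ProbabilityTheory.beta u v := by
  have hlen : 0 < B - A := sub_pos.2 hAB
  have hshift : ∫ r in A..B, (r - A) ^ (u - 1) * (B - r) ^ (v - 1) =
      ∫ x in (0 : ℝ)..(B - A), x ^ (u - 1) * (B - A - x) ^ (v - 1) := by
    simpa using integral_comp_sub_right
      (fun x : ℝ => x ^ (u - 1) * (B - A - x) ^ (v - 1)) A (a := A) (b := B)
  have hcomplex : ((∫ x in (0 : ℝ)..(B - A), x ^ (u - 1) * (B - A - x) ^ (v - 1) : ℝ) : ℂ) =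
      ((B - A : ℝ) : ℂ) ^ ((u : ℂ) + v - 1) * Complex.betaIntegral u v := by
    rw [← Complex.betaIntegral_scaled u v hlen, ← intervalIntegral.integral_ofReal]
    refine integral_congr_Ioo_of_le hlen.le fun x hx => ?_
    rw [Complex.ofReal_mul, Complex.ofReal_cpow hx.1.le, Complex.ofReal_cpow (sub_pos.2 hx.2).le]
    push_cast
    rfl
  rw [hshift, ProbabilityTheory.beta_eq_betaIntegralReal u v hu hv, ← Complex.re_ofReal_mul,
    Complex.ofReal_cpow hlen.le]
  push_cast at hcomplex ⊢
  rw [← hcomplex, Complex.ofReal_re]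

lemma integral_jacobiWeight (hα : α ∈ Ioo (0 : ℝ) 1) (hAB : A < B) :
    ∫ r in A..B, jacobiWeight A B α r = π / sin (π * α) := by
  have h := integral_rpow_mul_rpow hα.1 (sub_pos.2 hα.2) hAB
  rw [ProbabilityTheory.beta, Gamma_mul_Gamma_one_sub] at h
  simpa [jacobiWeight] using h

lemma sin_pi_mul_pos (hα : α ∈ Ioo (0 : ℝ) 1) : 0 < sin (π * α) :=
  sin_pos_of_pos_of_lt_pi (mul_pos pi_pos hα.1) (mul_lt_of_lt_one_right pi_pos hα.2)

lemma intervalIntegrable_jacobiWeight (hα : α ∈ Ioo (0 : ℝ) 1) (hAB : A < B) :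
    IntervalIntegrable (jacobiWeight A B α) volume A B := by
  apply intervalIntegrable_of_integral_ne_zero
  rw [integral_jacobiWeight hα hAB]
  exact (div_pos pi_pos (sin_pi_mul_pos hα)).ne'

lemma one_sub_crossRatio (hs : s ≠ A) (hr : r ≠ B) :
    1 - crossRatio A B s r = (B - A) * (s - r) / ((B - r) * (s - A)) := by
  rw [crossRatio, eq_div_iff (by grind), sub_mul, div_mul_cancel₀ _ (by grind)]
  ring

lemma hasDerivAt_crossRatio (hs : s ≠ A) (hr : r ≠ B) :
    HasDerivAt (crossRatio A B s) ((B - A) * (B - s) / ((B - r) ^ 2 * (s - A))) r := by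
  have hnum : HasDerivAt (fun r => (r - A) * (B - s)) (B - s) r := by
    simpa using ((hasDerivAt_id r).sub_const A).mul_const (B - s)
  have hden : HasDerivAt (fun r => (B - r) * (s - A)) (-(s - A)) r := by
    simpa using ((hasDerivAt_id r).const_sub B).mul_const (s - A)
  have hs' : s - A ≠ 0 := sub_ne_zero.2 hs
  have hr' : B - r ≠ 0 := sub_ne_zero.2 hr.symm
  convert! hnum.div hden (mul_ne_zero hr' hs') using 1
  field_simp
  ring

lemma monotoneOn_crossRatio (hs : s ∈ Ioo A B) : MonotoneOn (crossRatio A B s) (Ico A B) := by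
  intro x _ y hy hxy
  have := sub_pos.2 hs.1
  have := sub_pos.2 hs.2
  have := sub_pos.2 hy.2
  have := sub_nonneg.2 hy.1
  unfold crossRatio
  gcongr

lemma jacobiWeight_mul_pullback_crossRatio (hs : s ∈ Ioo A B) (hr : r ∈ Ico A s) :
    jacobiWeight A B α s * ((B - A) * (B - s) / ((B - r) ^ 2 * (s - A)) *
      (crossRatio A B s r ^ (α - 1) / (1 - crossRatio A B s r))) =
      jacobiWeight A B α r / (s - r) := by
  have hrA : 0 ≤ r - A := sub_nonneg.2 hr.1
  have hrB : 0 < B - r := sub_pos.2 (hr.2.trans hs.2)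
  have hsA : 0 < s - A := sub_pos.2 hs.1
  have hsB : 0 < B - s := sub_pos.2 hs.2
  have hBA : 0 < B - A := by linarith
  have hsr : 0 < s - r := sub_pos.2 hr.2
  rw [one_sub_crossRatio hs.1.ne' (hr.2.trans hs.2).ne, crossRatio, jacobiWeight, jacobiWeight,
    div_rpow (by positivity) (by positivity), mul_rpow hrA hsB.le, mul_rpow hrB.le hsA.le,
    rpow_neg hsB.le, rpow_neg hrB.le, rpow_sub_one hsB.ne', rpow_sub_one hrB.ne']
  field_simp

lemma integral_jacobiWeight_div_sub (hs : s ∈ Ioo A B) (ht : t ∈ Ico A s) :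
    ∫ r in A..t, jacobiWeight A B α r / (s - r) =
      jacobiWeight A B α s * ∫ x in (0 : ℝ)..crossRatio A B s t, x ^ (α - 1) / (1 - x) := by
  have hderiv (r : ℝ) (hr : r ∈ Icc A t) :=
    hasDerivAt_crossRatio hs.1.ne' ((hr.2.trans_lt ht.2).trans hs.2).ne
  have hmono : MonotoneOn (crossRatio A B s) (Icc A t) :=
    (monotoneOn_crossRatio hs).mono fun r hr => ⟨hr.1, (hr.2.trans_lt ht.2).trans hs.2⟩
  have hzero : crossRatio A B s A = 0 := by simp [crossRatio]
  have himage : crossRatio A B s '' Icc A t = Icc 0 (crossRatio A B s t) := by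
    rw [← hzero]
    exact ContinuousOn.image_Icc_of_monotoneOn ht.1
      (fun r hr => (hderiv r hr).continuousAt.continuousWithinAt) hmono
  have hnonneg : 0 ≤ crossRatio A B s t :=
    hzero ▸ hmono (left_mem_Icc.2 ht.1) (right_mem_Icc.2 ht.1) ht.1
  rw [integral_of_le ht.1, integral_of_le hnonneg, ← integral_Icc_eq_integral_Ioc,
    ← integral_Icc_eq_integral_Ioc, ← himage, integral_image_eq_integral_deriv_smul_of_monotoneOn
      measurableSet_Icc (fun r hr => (hderiv r hr).hasDerivWithinAt) hmono,
    ← MeasureTheory.integral_const_mul]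
  refine setIntegral_congr_fun measurableSet_Icc fun r hr => ?_
  exact (jacobiWeight_mul_pullback_crossRatio hs ⟨hr.1, hr.2.trans_lt ht.2⟩).symm

lemma tendsto_log_one_sub_crossRatio_sub_log (hs : s ∈ Ioo A B) :
    Tendsto (fun ε : ℝ => log (1 - crossRatio A B s (s - ε)) - log ε) (𝓝[>] 0)
      (𝓝 (log ((B - A) / ((s - A) * (B - s))))) := by
  have hsA : 0 < s - A := sub_pos.2 hs.1
  have hsB : 0 < B - s := sub_pos.2 hs.2
  have hBA : 0 < B - A := by linarith
  have hcont : ContinuousAt (fun ε : ℝ => log ((B - A) / ((s - A) * (B - s + ε)))) 0 := by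
    refine ContinuousAt.log (ContinuousAt.div (by fun_prop) (by fun_prop) ?_) ?_ <;>
    · simp only [add_zero]
      positivity
  have hlim := hcont.tendsto.mono_left (nhdsWithin_le_nhds (s := Ioi 0))
  simp only [add_zero] at hlim
  refine hlim.congr' ?_
  filter_upwards [self_mem_nhdsWithin] with ε hε
  have hε : 0 < ε := hε
  rw [one_sub_crossRatio hs.1.ne' (by linarith), sub_sub_cancel, sub_sub_eq_add_sub,
    add_sub_right_comm, ← log_div (by positivity) hε.ne']
  congr 1
  field_simp

lemma tendsto_crossRatio_sub (hs : s ∈ Ioo A B) :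
    Tendsto (fun ε : ℝ => crossRatio A B s (s - ε)) (𝓝[>] 0) (𝓝[<] 1) := by
  have hsA : 0 < s - A := sub_pos.2 hs.1
  have hsB : 0 < B - s := sub_pos.2 hs.2
  have hself : crossRatio A B s s = 1 := by
    rw [← sub_eq_zero, ← neg_sub, one_sub_crossRatio hs.1.ne' hs.2.ne, sub_self, mul_zero,
      zero_div, neg_zero]
  have hlim := (hasDerivAt_crossRatio hs.1.ne' hs.2.ne).continuousAt.tendsto.comp
    (tendsto_sub_nhdsGT_zero s)
  rw [hself] at hlim
  refine tendsto_nhdsWithin_iff.2 ⟨hlim, ?_⟩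
  filter_upwards [self_mem_nhdsWithin] with ε hε
  have hε : 0 < ε := hε
  rw [mem_Iio, ← sub_pos, one_sub_crossRatio hs.1.ne' (by linarith), sub_sub_cancel,
    sub_sub_eq_add_sub, add_sub_right_comm]
  have hBA : 0 < B - A := by linarith
  positivity

lemma tendsto_integral_jacobiWeight_div_sub_add_log (hα : 0 < α) (hs : s ∈ Ioo A B) :
    Tendsto (fun ε : ℝ =>
        (∫ r in A..(s - ε), jacobiWeight A B α r / (s - r)) + jacobiWeight A B α s * log ε)
      (𝓝[>] 0)
      (𝓝 (-jacobiWeight A B α s * (gaussDigamma α + log ((B - A) / ((s - A) * (B - s)))))) := by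
  have hlim := (((tendsto_integral_rpow_div_one_sub_add_log hα).comp
    (tendsto_crossRatio_sub hs)).sub (tendsto_log_one_sub_crossRatio_sub_log hs)).const_mul
      (jacobiWeight A B α s)
  rw [← neg_add', mul_neg, ← neg_mul] at hlim
  refine hlim.congr' ?_
  filter_upwards [Ioo_mem_nhdsGT (sub_pos.2 hs.1)] with ε hε
  rw [integral_jacobiWeight_div_sub hs ⟨by linarith [hε.2], by linarith [hε.1]⟩]
  simp only [Function.comp_apply]
  ring

lemma integral_jacobiWeight_div_sub_right :
    ∫ r in t..B, jacobiWeight A B α r / (r - s) =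
      ∫ r in (-B)..(-t), jacobiWeight (-B) (-A) (1 - α) r / (-s - r) := by
  rw [← integral_comp_neg]
  refine integral_congr fun r _ => ?_
  simp only [jacobiWeight_neg]
  ring_nf

lemma hasPrincipalValue_jacobiWeight_div_sub (hα : α ∈ Ioo (0 : ℝ) 1) (hs : s ∈ Ioo A B) :
    HasPrincipalValue (fun r => jacobiWeight A B α r / (r - s)) A B s
      (-(π * cot (π * α)) * jacobiWeight A B α s) := by
  refine ⟨?_, ?_⟩
  · have hint := intervalIntegrable_jacobiWeight hα (hs.1.trans hs.2)
    filter_upwards [eventually_sub_add_mem_Ioo hs] with ε hε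
    have hleft : s - ε ∈ uIcc A B := Icc_subset_uIcc ⟨hε.1.1.le, (hε.1.2.trans hs.2).le⟩
    have hright : s + ε ∈ uIcc A B := Icc_subset_uIcc ⟨(hs.1.trans hε.2.1).le, hε.2.2.le⟩
    exact ⟨intervalIntegrable_div_sub (hint.mono_set (uIcc_subset_uIcc_left hleft))
        (notMem_uIcc_of_gt hs.1 hε.1.2),
      intervalIntegrable_div_sub (hint.mono_set (uIcc_subset_uIcc_right hright))
        (notMem_uIcc_of_lt hε.2.1 hs.2)⟩
  · have hleft := tendsto_integral_jacobiWeight_div_sub_add_log hα.1 hs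
    have hright := tendsto_integral_jacobiWeight_div_sub_add_log (sub_pos.2 hα.2)
      (A := -B) (B := -A) (s := -s) ⟨neg_lt_neg hs.2, neg_lt_neg hs.1⟩
    rw [jacobiWeight_neg] at hright
    have hscale : (-A - -B) / ((-s - -B) * (-A - -s)) = (B - A) / ((s - A) * (B - s)) := by
      ring
    rw [hscale] at hright
    convert! hright.sub hleft using 2 with ε
    · have hneg : ∫ r in A..(s - ε), jacobiWeight A B α r / (r - s) =
          -∫ r in A..(s - ε), jacobiWeight A B α r / (s - r) := by
        rw [← intervalIntegral.integral_neg]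
        refine integral_congr fun r _ => ?_
        rw [← div_neg, neg_sub]
      rw [hneg, integral_jacobiWeight_div_sub_right, neg_add' s ε]
      ring
    · rw [← gaussDigamma_one_sub_sub_gaussDigamma hα]
      ring

end JacobiWeight

/-- The finite Hilbert transform of the weight `a(r) = ((r−A)/(B−r))^α`:
`(1/π) PV ∫_A^B ((r−A)/(B−r))^α/(r−s) dr = (1 − cos(πα)((s−A)/(B−s))^α)/sin(πα)`. -/
theorem hilbert_transform_of_weight (A B : ℝ) (hAB : A < B)
    (α : ℝ) (hα : α ∈ Set.Ioo (0 : ℝ) 1) (s : ℝ) (hs : s ∈ Set.Ioo A B) :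
    Tendsto
      (fun ε : ℝ =>
        (∫ r in A..(s - ε), ((r - A) / (B - r)) ^ α / (r - s)) +
          ∫ r in (s + ε)..B, ((r - A) / (B - r)) ^ α / (r - s))
      (𝓝[>] 0)
      (𝓝 (Real.pi *
        ((1 - Real.cos (Real.pi * α) * ((s - A) / (B - s)) ^ α) / Real.sin (Real.pi * α)))) := by
  have hw := hasPrincipalValue_of_intervalIntegrable (intervalIntegrable_jacobiWeight hα hAB) hs
  have hwH := (hasPrincipalValue_jacobiWeight_div_sub hα hs).const_smul (s - A)
  have hsplit : EqOn
      (fun r => jacobiWeight A B α r + (s - A) • (jacobiWeight A B α r / (r - s)))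
      (fun r => ((r - A) / (B - r)) ^ α / (r - s)) (Ioo A B \ {s}) := by
    rintro r ⟨hr, hrs⟩
    have hrs' : r - s ≠ 0 := sub_ne_zero.2 hrs
    simp only [smul_eq_mul, ← sub_mul_jacobiWeight hr]
    field_simp
    ring
  convert! ((hw.add hwH).congr hs hsplit).2 using 2
  rw [integral_jacobiWeight hα hAB, ← sub_mul_jacobiWeight hs, cot_eq_cos_div_sin, smul_eq_mul]
  ring
end
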